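/- Let k ≥ 1 and let v be a cyclically reduced word of length k in the letters u_1^{±1}, ..., u_N^{±1}. The number of words of length n whose standard cyclic reduction is v equals (2N-1)^{(n-k)/2} · C(n, (n-k)/2) when n - k is even and nonnegative (and is 0 otherwise). In particular, this number does not depend on v. -/

import Mathlib

/-!
Everything is lifted from the circle `[n]` to the line `ℤ`: a half-pairing becomes an `n`-periodic
non-crossing diagram of finite arcs and through strings (`Arcs`, `arcs_lift`), in which a point is
outward when it is a through string or the left end of an arc.  The count is the product of two
independent counts.

*Half-pairings.*  A half-pairing is determined by its set of inward points, because the partner of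
an inward point is the nearest earlier outward point with a closed interval in between
(`eq_of_out`).  Conversely every set `I` of fewer than `n / 2` points arises: the walk on `ℤ` that
goes up at points outside `I` and down at points of `I` has positive drift, its down-steps are
matched with the preceding up-steps at the same level, and the up-steps never matched are the
through strings (`arcs_of_height`, `exists_inSet`).  Hence there are `C(n, m)` half-pairings with
`m` pairs (`card_halfPairing`).

*Words of a fixed half-pairing.*  Inverse letters at the ends of each pair already force the word
to reduce cyclically to its through word, by removing shortest arcs first (`cycReduces`), and the
cover condition between two through strings is part of `v` being cyclically reduced
(`cover_through`).  After cutting the circle at a through string, reading the word from left to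
right leaves a free choice only at the `m` outward ends of pairs; there the letter must avoid the
inverse of the letter at the unique covering point.  This gives `(2N - 1) ^ m` words
(`card_words`).

*Uniqueness.*  A word has at most one admissible half-pairing (`admissible_unique`).  For an
admissible half-pairing, running the free reduction of the periodic word on a stack pushes exactly
at outward points and pops at inward points.  Two admissible half-pairings give two such runs,
which differ only by an initial part of the stack; since the drift is positive the stack eventually
stays above that part, so from then on the two orientations agree, and by periodicity they agree
everywhere (`out_unique`).
-/

namespace NCC

/-- A letter `u_i^{±1}`: a generator index together with a sign. -/
abbrev Letter (N : ℕ) := Fin N × Bool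

/-- The inverse of a letter. -/
def linv {N : ℕ} (l : Letter N) : Letter N := (l.1, !l.2)

/-- One cyclic reduction step: either a linear reduction step (removal of two
adjacent letters which are inverses of each other), or removal of the first and
last letters when they are inverses of each other. -/
def CyclicStep {N : ℕ} (w w' : List (Letter N)) : Prop :=
  FreeGroup.Red.Step w w' ∨
    ∃ (l : Letter N) (m : List (Letter N)), w = l :: (m ++ [linv l]) ∧ w' = m

/-- `w` reduces cyclically (in zero or more steps) to `v`. -/
def CycReducesTo {N : ℕ} (w v : List (Letter N)) : Prop :=
  Relation.ReflTransGen CyclicStep w v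

/-- A word is linearly reduced when no two adjacent letters are inverses of
each other. -/
def LinReduced {N : ℕ} (w : List (Letter N)) : Prop :=
  List.Chain' (fun a b => b ≠ linv a) w

/-- A word is cyclically reduced iff `w ++ w` is linearly reduced, i.e. it is
linearly reduced and its last letter is not the inverse of its first letter. -/
def CycReduced {N : ℕ} (w : List (Letter N)) : Prop :=
  LinReduced (w ++ w)

/-- A word is reducible to 1 if it linearly reduces to the empty word. -/
def ReducibleToOne {N : ℕ} (w : List (Letter N)) : Prop :=
  FreeGroup.Red w []

/-- A word has good reduction: no nonempty prefix is reducible to 1, and its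
linear reduction is cyclically reduced. -/
def GoodReduction {N : ℕ} (w : List (Letter N)) : Prop :=
  (∀ s, s <+: w → s ≠ [] → ¬ ReducibleToOne s) ∧
    CycReduced (FreeGroup.reduce w)

/-- The first `i` letters of the infinite word `w_∞ = w w w ⋯`. -/
def infTake {N : ℕ} (w : List (Letter N)) (i : ℕ) : List (Letter N) :=
  ((List.replicate i w).flatten).take i

open scoped Classical

/-- `i` and `j` lie in a common block of the partition `P`. -/
def Rel {n : ℕ} (P : Finpartition (Finset.univ : Finset (Fin n))) (i j : Fin n) : Prop :=
  ∃ B ∈ P.parts, i ∈ B ∧ j ∈ B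

/-- `i` lies in a singleton block of `P`. -/
def IsSingleton {n : ℕ} (P : Finpartition (Finset.univ : Finset (Fin n))) (i : Fin n) : Prop :=
  ∃ B ∈ P.parts, i ∈ B ∧ B.card = 1

/-- The relation of the partition `π̃` obtained from `P` by merging all
singleton blocks into a single block. -/
def RelTilde {n : ℕ} (P : Finpartition (Finset.univ : Finset (Fin n))) (i j : Fin n) : Prop :=
  Rel P i j ∨ (IsSingleton P i ∧ IsSingleton P j)

/-- An equivalence-like relation on `[n]` is non-crossing when there are no
`i₁ < i₂ < i₃ < i₄` with `i₁ ∼ i₃`, `i₂ ∼ i₄` but `i₁ ≁ i₂`. -/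
def NonCrossingRel {n : ℕ} (r : Fin n → Fin n → Prop) : Prop :=
  ∀ i1 i2 i3 i4 : Fin n, i1 < i2 → i2 < i3 → i3 < i4 → r i1 i3 → r i2 i4 → r i1 i2

/-- A non-crossing half-pairing on `[n]`: a non-crossing partition all of whose
blocks have at most two elements, with at least one singleton block (through
string), such that merging all singleton blocks still gives a non-crossing
partition. -/
structure HalfPairing (n : ℕ) where
  P : Finpartition (Finset.univ : Finset (Fin n))
  card_le : ∀ B ∈ P.parts, B.card ≤ 2
  exists_singleton : ∃ i, IsSingleton P i
  nc : NonCrossingRel (Rel P)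
  nc_tilde : NonCrossingRel (RelTilde P)

/-- `r` and `s` form a pair (a two-element block) of `π`. -/
def Pairs {n : ℕ} (π : HalfPairing n) (r s : Fin n) : Prop :=
  r ≠ s ∧ Rel π.P r s

/-- Membership in the cyclic interval `[i, j]` (going clockwise from `i` to
`j`, endpoints included). -/
def InCyc {n : ℕ} (i j x : Fin n) : Prop :=
  (x.val + n - i.val) % n ≤ (j.val + n - i.val) % n

/-- Cyclic successor of `i` in `[n]`. -/
def cnext {n : ℕ} (i : Fin n) : Fin n :=
  ⟨(i.val + 1) % n, Nat.mod_lt _ i.pos⟩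

/-- Cyclic predecessor of `i` in `[n]`. -/
def cprev {n : ℕ} (i : Fin n) : Fin n :=
  ⟨(i.val + n - 1) % n, Nat.mod_lt _ i.pos⟩

/-- `a + j` modulo `n`. -/
def cadd {n : ℕ} (a j : Fin n) : Fin n :=
  ⟨(a.val + j.val) % n, Nat.mod_lt _ a.pos⟩

/-- `x - a` modulo `n`. -/
def csub {n : ℕ} (x a : Fin n) : Fin n :=
  ⟨(x.val + n - a.val) % n, Nat.mod_lt _ a.pos⟩

/-- `i` has the outward orientation: it is a singleton, or it is the point of a
pair `(i, s)` such that the cyclic interval `[i, s]` contains no singleton. -/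
def OutOriented {n : ℕ} (π : HalfPairing n) (i : Fin n) : Prop :=
  IsSingleton π.P i ∨
    ∃ s, Pairs π i s ∧ ∀ x, InCyc i s x → ¬ IsSingleton π.P x

/-- `i` covers `j`: both are outward oriented, and either `j` is the cyclic
successor of `i`, or `π` pairs each point of the cyclic interval
`[i+1, j-1]` with another point of `[i+1, j-1]`. -/
def Covers {n : ℕ} (π : HalfPairing n) (i j : Fin n) : Prop :=
  OutOriented π i ∧ OutOriented π j ∧
    (j = cnext i ∨
      ∀ x, InCyc (cnext i) (cprev j) x →
        ∃ y, y ≠ x ∧ InCyc (cnext i) (cprev j) y ∧ Pairs π x y)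

/-- The set of through strings (singleton blocks) of `π`. -/
noncomputable def throughFinset {n : ℕ} (π : HalfPairing n) : Finset (Fin n) :=
  Finset.univ.filter (fun i => IsSingleton π.P i)

/-- The word formed by the letters of `w` at the through strings of `π`,
read in increasing order of position. -/
noncomputable def throughWord {n N : ℕ} (w : Fin n → Letter N) (π : HalfPairing n) :
    List (Letter N) :=
  ((throughFinset π).sort (· ≤ ·)).map w

/-- `π` is a `w`-pairing: paired positions carry mutually inverse letters, and
the through-string letters, read in order, form a cyclic reduction of `w`. -/
def IsWPairing {n N : ℕ} (w : Fin n → Letter N) (π : HalfPairing n) : Prop :=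
  (∀ r s, Pairs π r s → w r = linv (w s)) ∧
    CycReducesTo (List.ofFn w) (throughWord w π) ∧ CycReduced (throughWord w π)

/-- `π` is `w`-admissible: it is a `w`-pairing and `l_i ≠ l_j⁻¹` whenever
`i` covers `j`. -/
def Admissible {n N : ℕ} (w : Fin n → Letter N) (π : HalfPairing n) : Prop :=
  IsWPairing w π ∧ ∀ i j, Covers π i j → w i ≠ linv (w j)

/-- `v` is the standard cyclic reduction of `w`: the through-string word of
the (unique) `w`-admissible non-crossing half-pairing. -/
def StandardCycRed {n N : ℕ} (w : Fin n → Letter N) (v : List (Letter N)) : Prop :=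
  ∃ π : HalfPairing n, Admissible w π ∧ throughWord w π = v

/-! ### Arc diagrams on the integers -/

/-- An `n`-periodic arc diagram on `ℤ`, the lift of a non-crossing half-pairing to the universal
cover of the circle: `S t` says that `t` is a through string, `M r s` that `r < s` is an arc,
directed from its outward end `r` to its inward end `s`. -/
structure Arcs (n : ℤ) (S : ℤ → Prop) (M : ℤ → ℤ → Prop) : Prop where
  pos : 0 < n
  lt : ∀ {r s}, M r s → r < s
  nS : ∀ {r s x}, M r s → r ≤ x → x ≤ s → ¬ S x
  right_unique : ∀ {r s s'}, M r s → M r s' → s = s'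
  left_unique : ∀ {r r' s}, M r s → M r' s → r = r'
  not_both : ∀ {r s t}, M r s → ¬ M s t
  total : ∀ t, S t ∨ (∃ s, M t s) ∨ ∃ r, M r t
  nc : ∀ {r s r' s'}, M r s → M r' s' → r < r' → r' < s → s' < s
  perS : ∀ t, S (t + n) ↔ S t
  perM : ∀ r s, M (r + n) (s + n) ↔ M r s
  exS : ∃ t, S t

/-- Every point of the half-open interval `[a, b)` is joined by an arc to a point of `[a, b)`. -/
def AClosed (M : ℤ → ℤ → Prop) (a b : ℤ) : Prop :=
  ∀ t, a ≤ t → t < b → ∃ u, a ≤ u ∧ u < b ∧ (M t u ∨ M u t)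

/-- `t` is outward oriented: a through string or the left end of an arc. -/
def AOut (S : ℤ → Prop) (M : ℤ → ℤ → Prop) (t : ℤ) : Prop := S t ∨ ∃ s, M t s

lemma AClosed.append {M : ℤ → ℤ → Prop} {a b c : ℤ} (h1 : AClosed M a b) (h2 : AClosed M b c)
    (hab : a ≤ b) (hbc : b ≤ c) : AClosed M a c := by
  intro t h3 h4
  rcases lt_or_ge t b with h | h
  · obtain ⟨u, hu⟩ := h1 t h3 h; exact ⟨u, by omega, by omega, hu.2.2⟩
  · obtain ⟨u, hu⟩ := h2 t h h4; exact ⟨u, by omega, by omega, hu.2.2⟩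

lemma AClosed.of_le {M : ℤ → ℤ → Prop} {a b : ℤ} (h : b ≤ a) : AClosed M a b := by
  intro t h1 h2; omega

/-- A property invariant under translation by `n` is invariant under multiples of `n`. -/
lemma per_mul {n : ℤ} {S : ℤ → Prop} (h : ∀ t, S (t + n) ↔ S t) (q t : ℤ) :
    S (t + q * n) ↔ S t := by
  induction q using Int.induction_on with
  | zero => simp
  | succ i ih => rw [← ih, ← h (t + i * n)]; ring_nf
  | pred i ih => rw [← ih, ← h (t + (-i - 1) * n)]; ring_nf

namespace Arcs
variable {n : ℤ} {S : ℤ → Prop} {M : ℤ → ℤ → Prop} (A : Arcs n S M)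
include A

lemma perM_mul (q r s : ℤ) : M (r + q * n) (s + q * n) ↔ M r s := by
  have := per_mul (n := n) (S := fun x => M (r + x) (s + x))
    (fun t => by have := A.perM (r + t) (s + t); simpa [add_assoc] using this) q 0
  simpa using this

lemma exists_S_Ico (a : ℤ) : ∃ t, a ≤ t ∧ t < a + n ∧ S t := by
  obtain ⟨t, ht⟩ := A.exS
  have hn := A.pos
  refine ⟨a + (t - a) % n, ?_, ?_, ?_⟩
  · have := Int.emod_nonneg (t - a) hn.ne'; omega
  · have := Int.emod_lt_of_pos (t - a) hn; omega
  · have : a + (t - a) % n = t + (-((t - a) / n)) * n := by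
      have := Int.emod_add_mul_ediv (t - a) n; linarith
    rw [this, per_mul A.perS]; exact ht

lemma closed_not_S {a b t : ℤ} (h : AClosed M a b) (h1 : a ≤ t) (h2 : t < b) : ¬ S t := by
  obtain ⟨u, -, -, hu | hu⟩ := h t h1 h2
  · exact A.nS hu le_rfl (A.lt hu).le
  · exact A.nS hu (A.lt hu).le le_rfl

lemma closed_lt {a b : ℤ} (h : AClosed M a b) : b < a + n := by
  by_contra hb
  obtain ⟨t, h1, h2, h3⟩ := A.exists_S_Ico a
  exact A.closed_not_S h h1 (by omega) h3

lemma M_lt {r s : ℤ} (h : M r s) : s < r + n := by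
  by_contra hb
  obtain ⟨t, h1, h2, h3⟩ := A.exists_S_Ico r
  exact A.nS h h1 (by omega) h3

lemma interior {r s : ℤ} (h : M r s) : AClosed M (r + 1) s := by
  intro t h1 h2
  rcases A.total t with h3 | ⟨u, h3⟩ | ⟨u, h3⟩
  · exact absurd h3 (A.nS h (by omega) (by omega))
  · have := A.nc h h3 (by omega) h2
    have := A.lt h3
    exact ⟨u, by omega, by omega, Or.inl h3⟩
  · have := A.lt h3
    refine ⟨u, ?_, by omega, Or.inr h3⟩
    rcases lt_trichotomy u r with h4 | h4 | h4
    · have := A.nc h3 h h4 (by omega); omega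
    · subst h4; have := A.right_unique h h3; omega
    · omega

lemma closed_split {a b : ℤ} (h : AClosed M a b) (hab : a < b) :
    ∃ a', M a a' ∧ a' < b ∧ AClosed M (a + 1) a' ∧ AClosed M (a' + 1) b := by
  obtain ⟨a', h1, h2, h3 | h3⟩ := h a le_rfl hab
  swap
  · have := A.lt h3; omega
  refine ⟨a', h3, h2, A.interior h3, ?_⟩
  intro t h4 h5
  have := A.lt h3
  obtain ⟨u, h6, h7, h8 | h8⟩ := h t (by omega) h5
  · have := A.lt h8
    exact ⟨u, by omega, h7, Or.inl h8⟩
  · refine ⟨u, ?_, h7, Or.inr h8⟩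
    by_contra h9
    rcases eq_or_ne u a' with h10 | h10
    · subst h10; exact A.not_both h3 h8
    rcases eq_or_ne u a with h11 | h11
    · subst h11; have := A.right_unique h3 h8; omega
    have := A.nc h3 h8 (by omega) (by omega)
    omega

lemma closed_full {r s : ℤ} (h : M r s) : AClosed M r (s + 1) := by
  intro t h1 h2
  have hrs := A.lt h
  rcases eq_or_ne t r with h3 | h3
  · subst h3; exact ⟨s, by omega, by omega, Or.inl h⟩
  rcases eq_or_ne t s with h4 | h4
  · subst h4; exact ⟨r, by omega, by omega, Or.inr h⟩
  obtain ⟨u, hu⟩ := A.interior h t (by omega) (by omega)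
  exact ⟨u, by omega, by omega, hu.2.2⟩

lemma not_out_iff {t : ℤ} : ¬ AOut S M t ↔ ∃ r, M r t := by
  constructor
  · intro h
    rcases A.total t with h1 | h1 | h1
    · exact absurd (Or.inl h1) h
    · exact absurd (Or.inr h1) h
    · exact h1
  · rintro ⟨r, h⟩ (h1 | ⟨s, h1⟩)
    · exact A.nS h (A.lt h).le le_rfl h1
    · exact A.not_both h h1

lemma perOut (t : ℤ) : AOut S M (t + n) ↔ AOut S M t := by
  unfold AOut
  rw [A.perS]
  apply or_congr Iff.rfl
  constructor
  · rintro ⟨s, h⟩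
    exact ⟨s - n, by rw [← A.perM]; simpa using h⟩
  · rintro ⟨s, h⟩
    exact ⟨s + n, (A.perM _ _).2 h⟩

/-- Every point to the right of a through string is covered by an outward point that is not to
the left of that string. -/
lemma exists_pred {t0 : ℤ} (h0 : S t0) (t : ℤ) (ht : t0 < t) :
    ∃ i, t0 ≤ i ∧ i < t ∧ AOut S M i ∧ AClosed M (i + 1) t := by
  obtain ⟨j, rfl⟩ : ∃ j : ℕ, t = t0 + 1 + j := ⟨(t - t0 - 1).toNat, by omega⟩
  induction j using Nat.strong_induction_on with
  | _ j ih =>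
    by_cases h : AOut S M (t0 + j)
    · exact ⟨t0 + j, by omega, by omega, h, AClosed.of_le (by omega)⟩
    · obtain ⟨r, hr⟩ := A.not_out_iff.1 h
      have hlt := A.lt hr
      have hr0 : t0 < r := by
        by_contra hc
        exact A.nS hr (by omega) (by omega) h0
      obtain ⟨i, h1, h2, h3, h4⟩ := ih (r - t0 - 1).toNat (by omega) (by omega)
      refine ⟨i, h1, by omega, h3, ?_⟩
      have e : t0 + 1 + ((r - t0 - 1).toNat : ℤ) = r := by omega
      rw [e] at h4
      have := h4.append (A.closed_full hr) (by omega) (by omega)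
      convert this using 1
      ring

/-- The outward point covering a given point is unique. -/
lemma pred_unique {i i' t : ℤ} (h : AOut S M i) (h' : AOut S M i') (hi : i < t)
    (hi' : i' < t) (hc : AClosed M (i + 1) t) (hc' : AClosed M (i' + 1) t) : i = i' := by
  have key : ∀ {i i' t : ℤ}, AOut S M i → AOut S M i' → i < t → i' < t →
      AClosed M (i + 1) t → AClosed M (i' + 1) t → ¬ i < i' := by
    intro i i' t h h' hi hi' hc hc' hlt
    obtain ⟨u, h1, h2, h3 | h3⟩ := hc i' (by omega) hi'
    · have := A.lt h3
      obtain ⟨u', h4, h5, h6 | h6⟩ := hc' u (by omega) h2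
      · exact A.not_both h3 h6
      · have := A.left_unique h3 h6; omega
    · exact A.not_out_iff.2 ⟨u, h3⟩ h'
  rcases lt_trichotomy i i' with h1 | h1 | h1
  · exact absurd h1 (key h h' hi hi' hc hc')
  · exact h1
  · exact absurd h1 (key h' h hi' hi hc' hc)

/-- If the point covering `t` is `i`, an arc ending at `t` starts at `i`. -/
lemma arc_start {i r t : ℤ} (h : AOut S M i) (hi : i < t) (hc : AClosed M (i + 1) t)
    (hr : M r t) : r = i := by
  have h1 := A.interior hr
  exact A.pred_unique (Or.inr ⟨t, hr⟩) h (A.lt hr) hi h1 hc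

/-- A through string is only covered by through strings. -/
lemma pred_of_S {i t : ℤ} (h : AOut S M i) (hi : i < t) (hc : AClosed M (i + 1) t)
    (ht : S t) : S i := by
  rcases h with h | ⟨s, h⟩
  · exact h
  · exfalso
    have h1 := A.lt h
    by_cases h2 : t ≤ s
    · exact A.nS h hi.le h2 ht
    · obtain ⟨u, h4, h5, h6 | h6⟩ := hc s (by omega) (by omega)
      · exact A.not_both h h6
      · have := A.left_unique h h6; omega

/-- The arcs are determined by the set of outward points. -/
lemma M_of_out {S' : ℤ → Prop} {M' : ℤ → ℤ → Prop} (A' : Arcs n S' M')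
    (hO : ∀ t, AOut S M t ↔ AOut S' M' t) : ∀ {r s : ℤ}, M r s → M' r s := by
  have key : ∀ (j : ℕ) (r s : ℤ), s = r + j → M r s → M' r s := by
    intro j
    induction j using Nat.strong_induction_on with
    | _ j ih =>
      intro r s hs h
      have hc : AClosed M' (r + 1) s := by
        intro t h1 h2
        obtain ⟨u, h3, h4, h5 | h5⟩ := A.interior h t h1 h2
        · have := A.lt h5
          exact ⟨u, h3, h4, Or.inl (ih (u - t).toNat (by omega) _ _ (by omega) h5)⟩
        · have := A.lt h5
          exact ⟨u, h3, h4, Or.inr (ih (t - u).toNat (by omega) _ _ (by omega) h5)⟩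
      have hs' : ¬ AOut S' M' s := by
        rw [← hO]; exact A.not_out_iff.2 ⟨r, h⟩
      obtain ⟨r', hr'⟩ := A'.not_out_iff.1 hs'
      have := A'.arc_start ((hO r).1 (Or.inr ⟨s, h⟩)) (A.lt h) hc hr'
      rwa [← this]
  intro r s h
  have := A.lt h
  exact key (s - r).toNat r s (by omega) h

lemma S_iff {t : ℤ} : S t ↔ AOut S M t ∧ ¬ ∃ s, M t s := by
  constructor
  · intro h
    exact ⟨Or.inl h, fun ⟨s, hs⟩ => A.nS hs le_rfl (A.lt hs).le h⟩
  · rintro ⟨h | h, h'⟩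
    · exact h
    · exact absurd h h'

end Arcs

/-! ### Height functions -/

/-- The height function of a set `O` of integers: `ht O 0 = 0`, and the height increases by one
when passing a point of `O` and decreases by one when passing any other point. -/
noncomputable def ht (O : ℤ → Prop) : ℤ → ℤ
  | Int.ofNat m => ∑ i ∈ Finset.range m, (if O (i : ℤ) then 1 else -1)
  | Int.negSucc m => -∑ i ∈ Finset.range (m + 1), (if O (-(i : ℤ) - 1) then 1 else -1)

lemma ht_zero (O : ℤ → Prop) : ht O 0 = 0 := by
  change ht O (Int.ofNat 0) = 0
  simp [ht]

lemma ht_natCast (O : ℤ → Prop) (m : ℕ) :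
    ht O m = ∑ i ∈ Finset.range m, (if O (i : ℤ) then 1 else -1) := rfl

lemma ht_succ (O : ℤ → Prop) (t : ℤ) : ht O (t + 1) = ht O t + (if O t then 1 else -1) := by
  rcases t with m | m
  · change ht O (Int.ofNat (m + 1)) = ht O (Int.ofNat m) + _
    simp only [ht, Finset.sum_range_succ]
    rfl
  · rcases m with _ | m
    · have h1 : Int.negSucc 0 + 1 = Int.ofNat 0 := rfl
      have h2 : Int.negSucc 0 = -1 := rfl
      rw [h1]
      simp [ht, h2]
    · have h1 : Int.negSucc (m + 1) + 1 = Int.negSucc m := by omega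
      have h2 : Int.negSucc (m + 1) = -((m + 1 : ℕ) : ℤ) - 1 := by omega
      rw [h1]
      simp only [ht, Finset.sum_range_succ _ (m + 1), ← h2]
      ring

lemma ht_succ_of {O : ℤ → Prop} {t : ℤ} (h : O t) : ht O (t + 1) = ht O t + 1 := by
  rw [ht_succ, if_pos h]

lemma ht_succ_of_not {O : ℤ → Prop} {t : ℤ} (h : ¬ O t) : ht O (t + 1) = ht O t - 1 := by
  rw [ht_succ, if_neg h]; ring

lemma ht_period {O : ℤ → Prop} {n : ℤ} (hO : ∀ t, O (t + n) ↔ O t) (t : ℤ) :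
    ht O (t + n) = ht O t + ht O n := by
  induction t using Int.induction_on with
  | zero => simp [ht_zero]
  | succ i ih =>
    have e : (i : ℤ) + 1 + n = (i + n) + 1 := by ring
    rw [e, ht_succ, ht_succ, ih]
    simp only [hO]; ring
  | pred i ih =>
    have h1 := ht_succ O (-(i : ℤ) - 1 + n)
    have h2 := ht_succ O (-(i : ℤ) - 1)
    have e : -(i : ℤ) - 1 + n + 1 = -i + n := by ring
    have e' : -(i : ℤ) - 1 + 1 = -i := by ring
    rw [e, ih] at h1
    rw [e'] at h2
    simp only [hO] at h1
    linarith

lemma ht_period_mul {O : ℤ → Prop} {n : ℤ} (hO : ∀ t, O (t + n) ↔ O t) (q t : ℤ) :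
    ht O (t + q * n) = ht O t + q * ht O n := by
  induction q using Int.induction_on with
  | zero => simp
  | succ i ih =>
    have e : t + ((i : ℤ) + 1) * n = (t + i * n) + n := by ring
    rw [e, ht_period hO, ih]; ring
  | pred i ih =>
    have e : t + (-i : ℤ) * n = (t + (-i - 1) * n) + n := by ring
    rw [e, ht_period hO] at ih; linarith

lemma ht_lipschitz (O : ℤ → Prop) (t : ℤ) (j : ℕ) :
    ht O t - j ≤ ht O (t + j) ∧ ht O (t + j) ≤ ht O t + j := by
  induction j with
  | zero => simp
  | succ j ih =>
    have e : t + ((j + 1 : ℕ) : ℤ) = t + j + 1 := by push_cast; ring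
    rw [e, ht_succ]
    split_ifs <;> push_cast <;> constructor <;> linarith

lemma ht_bounds {O : ℤ → Prop} {n : ℤ} (hn : 0 < n) (hO : ∀ t, O (t + n) ↔ O t) (t : ℤ) :
    (t / n) * ht O n - n ≤ ht O t ∧ ht O t ≤ (t / n) * ht O n + n := by
  have h1 := ht_period_mul hO (t / n) (t % n)
  rw [Int.emod_add_ediv_mul] at h1
  have h2 := ht_lipschitz O 0 (t % n).toNat
  have h3 := Int.emod_nonneg t hn.ne'
  have h4 := Int.emod_lt_of_pos t hn
  rw [Int.toNat_of_nonneg h3, ht_zero, zero_add] at h2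
  constructor <;> linarith

/-- For positive drift, the height is bounded below far to the right. -/
lemma exists_ht_gt {O : ℤ → Prop} {n : ℤ} (hn : 0 < n) (hO : ∀ t, O (t + n) ↔ O t)
    (hk : 0 < ht O n) (c : ℤ) : ∃ B, ∀ t, B ≤ t → c < ht O t := by
  refine ⟨(|c| + n + 1) * n, fun t ht' => ?_⟩
  have h1 := (ht_bounds hn hO t).1
  have h2 : |c| + n + 1 ≤ t / n := (Int.le_ediv_iff_mul_le hn).2 ht'
  have h3 := le_abs_self c
  have h4 := abs_nonneg c
  nlinarith

/-- For positive drift, the height is bounded above far to the left. -/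
lemma exists_ht_lt {O : ℤ → Prop} {n : ℤ} (hn : 0 < n) (hO : ∀ t, O (t + n) ↔ O t)
    (hk : 0 < ht O n) (c : ℤ) : ∃ B, ∀ t, t ≤ B → ht O t < c := by
  refine ⟨-(|c| + n + 1) * n, fun t ht' => ?_⟩
  have h1 := (ht_bounds hn hO t).2
  have h2 : t / n ≤ -(|c| + n + 1) := by
    have := Int.ediv_le_ediv hn ht'
    rwa [Int.mul_ediv_cancel _ hn.ne'] at this
  have h3 := neg_abs_le c
  have h4 := abs_nonneg c
  nlinarith

/-- Through strings of the diagram of `O`: points after which the height stays strictly above. -/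
def hS (O : ℤ → Prop) (t : ℤ) : Prop := ∀ u, t < u → ht O t < ht O u

/-- Arcs of the diagram of `O`: `s` is the step at which the height first returns to its value
before `r`. -/
def hM (O : ℤ → Prop) (r s : ℤ) : Prop :=
  r < s ∧ ht O (s + 1) = ht O r ∧ ∀ u, r < u → u ≤ s → ht O r < ht O u

/-- Every periodic set with positive drift is the set of outward points of an arc diagram. -/
lemma arcs_of_height {O : ℤ → Prop} {n : ℤ} (hn : 0 < n) (hO : ∀ t, O (t + n) ↔ O t)
    (hk : 0 < ht O n) : Arcs n (hS O) (hM O) where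
  pos := hn
  lt := fun h => h.1
  nS := by
    rintro r s x ⟨h1, h2, h3⟩ hr hs h
    have h4 := h (s + 1) (by omega)
    rcases hr.eq_or_lt with h5 | h5
    · subst h5; omega
    · have := h3 x h5 hs; omega
  right_unique := by
    rintro r s s' ⟨h1, h2, h3⟩ ⟨h1', h2', h3'⟩
    rcases lt_trichotomy s s' with h | h | h
    · have := h3' (s + 1) (by omega) (by omega); omega
    · exact h
    · have := h3 (s' + 1) (by omega) (by omega); omega
  left_unique := by
    rintro r r' s ⟨h1, h2, h3⟩ ⟨h1', h2', h3'⟩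
    rcases lt_trichotomy r r' with h | h | h
    · have := h3 r' (by omega) (by omega); omega
    · exact h
    · have := h3' r (by omega) (by omega); omega
  not_both := by
    rintro r s t ⟨h1, h2, h3⟩ ⟨h1', h2', h3'⟩
    have := h3 s h1 le_rfl
    have := h3' (s + 1) (by omega) (by omega)
    omega
  total := by
    intro t
    by_cases hOt : O t
    · have h1 := ht_succ_of hOt
      by_cases hS' : hS O t
      · exact Or.inl hS'
      refine Or.inr (Or.inl ?_)
      unfold hS at hS'
      push Not at hS'
      obtain ⟨u, hu, hu'⟩ := hS'
      obtain ⟨lb, ⟨hl1, hl2⟩, hl3⟩ := Int.exists_least_of_bdd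
        (P := fun u => t < u ∧ ht O u ≤ ht O t) ⟨t, fun z hz => hz.1.le⟩ ⟨u, hu, hu'⟩
      have hne : lb ≠ t + 1 := by rintro rfl; omega
      have h2 : ht O t < ht O (lb - 1) := by
        by_contra hc
        have := hl3 (lb - 1) ⟨by omega, by omega⟩; omega
      have h3 := ht_succ O (lb - 1)
      rw [sub_add_cancel] at h3
      refine ⟨lb - 1, by omega, ?_, ?_⟩
      · rw [sub_add_cancel]; split_ifs at h3 <;> omega
      · intro x hx hx'
        by_contra hc
        have := hl3 x ⟨hx, by omega⟩; omega
    · have h1 := ht_succ_of_not hOt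
      refine Or.inr (Or.inr ?_)
      obtain ⟨B, hB⟩ := exists_ht_lt hn hO hk (ht O (t + 1))
      obtain ⟨r, ⟨hl1, hl2⟩, hl3⟩ := Int.exists_greatest_of_bdd
        (P := fun u => u ≤ t ∧ ht O u ≤ ht O (t + 1)) ⟨t, fun z hz => hz.1⟩
        ⟨min B t, min_le_right _ _, (hB _ (min_le_left _ _)).le⟩
      have hne : r ≠ t := by rintro rfl; omega
      have h2 : ht O (t + 1) < ht O (r + 1) := by
        by_contra hc
        have := hl3 (r + 1) ⟨by omega, by omega⟩; omega
      have h3 := ht_succ O r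
      have h4 : ht O (t + 1) = ht O r := by split_ifs at h3 <;> omega
      refine ⟨r, by omega, h4, ?_⟩
      intro x hx hx'
      by_contra hc
      have := hl3 x ⟨hx', by omega⟩; omega
  nc := by
    rintro r s r' s' ⟨h1, h2, h3⟩ ⟨h1', h2', h3'⟩ h4 h5
    by_contra hc
    have := h3 r' h4 h5.le
    rcases eq_or_ne s s' with h6 | h6
    · subst h6; omega
    · have := h3' (s + 1) (by omega) (by omega); omega
  perS := by
    intro t
    constructor
    · intro h u hu
      have := h (u + n) (by omega)
      rw [ht_period hO, ht_period hO] at this; omega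
    · intro h u hu
      have := h (u - n) (by omega)
      have h2 := ht_period hO (u - n)
      rw [sub_add_cancel] at h2
      rw [ht_period hO]; omega
  perM := by
    intro r s
    unfold hM
    have e : s + n + 1 = s + 1 + n := by ring
    rw [e, ht_period hO, ht_period hO]
    refine and_congr (by omega) (and_congr (by omega) ?_)
    constructor
    · intro h u hu hu'
      have := h (u + n) (by omega) (by omega)
      rw [ht_period hO] at this; omega
    · intro h u hu hu'
      have := h (u - n) (by omega) (by omega)
      have h2 := ht_period hO (u - n)
      rw [sub_add_cancel] at h2
      omega
  exS := by
    obtain ⟨B, hB⟩ := exists_ht_gt hn hO hk 0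
    obtain ⟨t, h1, h2⟩ := Int.exists_greatest_of_bdd (P := fun u => ht O u ≤ 0)
      ⟨B, fun z hz => by
        by_contra hc
        have := hB z (by omega)
        omega⟩ ⟨0, (ht_zero O).le⟩
    refine ⟨t, fun u hu => ?_⟩
    by_contra hc
    have := h2 u (by omega)
    omega

lemma hOut_iff {O : ℤ → Prop} {n : ℤ} (hn : 0 < n) (hO : ∀ t, O (t + n) ↔ O t)
    (hk : 0 < ht O n) (t : ℤ) : AOut (hS O) (hM O) t ↔ O t := by
  have A := arcs_of_height hn hO hk
  constructor
  · intro h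
    by_contra hc
    have h1 := ht_succ_of_not hc
    rcases h with h | ⟨s, h⟩
    · have := h (t + 1) (by omega); omega
    · have := h.2.2 (t + 1) (by omega) (by have := h.1; omega); omega
  · intro h
    by_contra hc
    obtain ⟨r, hr⟩ := A.not_out_iff.1 hc
    have h1 := ht_succ_of h
    have := hr.2.1
    have := hr.2.2 t hr.1 le_rfl
    omega

/-! ### The reduction stack -/

lemma linv_linv {N : ℕ} (l : Letter N) : linv (linv l) = l := by simp [linv]

lemma linv_ne {N : ℕ} (l : Letter N) : linv l ≠ l := by
  intro h
  have := congrArg Prod.snd h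
  simp [linv] at this

/-- One step of left-to-right free reduction: the letter `l` cancels the top of the stack if the
two are inverse to each other, and is pushed otherwise. -/
noncomputable def sstep {N : ℕ} (T : List (Letter N)) (l : Letter N) : List (Letter N) :=
  if T.head? = some (linv l) then T.tail else l :: T

/-- The stack after reading the `j` letters `W a, …, W (a + j - 1)`, starting from `T`. -/
noncomputable def srun {N : ℕ} (W : ℤ → Letter N) (T : List (Letter N)) (a : ℤ) :
    ℕ → List (Letter N)
  | 0 => T
  | j + 1 => sstep (srun W T a j) (W (a + j))

variable {N : ℕ} {W : ℤ → Letter N}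

lemma srun_add (T : List (Letter N)) (a : ℤ) (i j : ℕ) :
    srun W T a (i + j) = srun W (srun W T a i) (a + i) j := by
  induction j with
  | zero => rfl
  | succ j ih =>
    change sstep (srun W T a (i + j)) _ = sstep _ _
    rw [ih, add_assoc, ← Nat.cast_add]; rfl

/-- The lifted word `W` is compatible with an arc diagram: arcs join inverse letters, and an
outward point never carries the inverse of the letter of the point covering it. -/
structure Compat (S : ℤ → Prop) (M : ℤ → ℤ → Prop) (W : ℤ → Letter N) : Prop where
  pair : ∀ {r s}, M r s → W s = linv (W r)
  cover : ∀ {i j}, i < j → AOut S M i → AOut S M j → AClosed M (i + 1) j → W i ≠ linv (W j)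

section
variable {n : ℤ} {S : ℤ → Prop} {M : ℤ → ℤ → Prop} (A : Arcs n S M) (C : Compat S M W)
include A C

/-- Reading a closed interval leaves the stack unchanged. -/
lemma srun_closed (j : ℕ) : ∀ (i a : ℤ) (T : List (Letter N)), i < a → AOut S M i →
    AClosed M (i + 1) a → AClosed M a (a + j) → T.head? = some (W i) → srun W T a j = T := by
  induction j using Nat.strong_induction_on with
  | _ j ih =>
    intro i a T hia hi hc hc' hT
    rcases Nat.eq_zero_or_pos j with rfl | hj
    · rfl
    obtain ⟨a', h1, h2, h3, h4⟩ := A.closed_split hc' (by omega)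
    have hlt := A.lt h1
    obtain ⟨b, rfl⟩ : ∃ b : ℕ, a' = a + 1 + b := ⟨(a' - (a + 1)).toNat, by omega⟩
    obtain ⟨c, rfl⟩ : ∃ c : ℕ, j = 1 + (b + (1 + c)) := ⟨j - (b + 2), by omega⟩
    have e1 : srun W T a 1 = W a :: T := by
      change sstep T (W (a + (0 : ℕ))) = _
      rw [Nat.cast_zero, add_zero, sstep, if_neg]
      rw [hT]
      intro h
      exact C.cover hia hi (Or.inr ⟨_, h1⟩) hc (Option.some.inj h)
    have e2 : srun W (W a :: T) (a + 1) b = W a :: T :=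
      ih b (by omega) a (a + 1) _ (by omega) (Or.inr ⟨_, h1⟩) (AClosed.of_le (by omega)) h3 rfl
    have e3 : srun W (W a :: T) (a + 1 + b) 1 = T := by
      change sstep _ (W (a + 1 + b + (0 : ℕ))) = _
      rw [Nat.cast_zero, add_zero, sstep, if_pos]
      · rfl
      · rw [C.pair h1, linv_linv]; rfl
    rw [srun_add, e1, Nat.cast_one, srun_add, e2, srun_add, e3]
    refine ih c (by omega) i _ T (by push_cast; omega) hi ?_ ?_ hT
    · have := hc.append (A.closed_full h1) (by omega) (by omega)
      push_cast; convert this using 1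
    · push_cast at h4 ⊢; convert h4 using 1; ring

/-- Started at a through string, the top of the stack is the letter of the point covering the
current position. -/
lemma srun_head {t0 : ℤ} (h0 : S t0) (j : ℕ) :
    ∃ i, i < t0 + 1 + j ∧ AOut S M i ∧ AClosed M (i + 1) (t0 + 1 + j) ∧
      (srun W [] t0 (1 + j)).head? = some (W i) := by
  have push : ∀ (T : List (Letter N)) (i t : ℤ), i < t → AOut S M i → AClosed M (i + 1) t →
      T.head? = some (W i) → AOut S M t → sstep T (W t) = W t :: T := by
    intro T i t h1 h2 h3 h4 h5
    rw [sstep, if_neg]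
    rw [h4]
    intro h
    exact C.cover h1 h2 h5 h3 (Option.some.inj h)
  induction j using Nat.strong_induction_on with
  | _ j ih =>
    rcases j with _ | j
    · refine ⟨t0, by simp, Or.inl h0, AClosed.of_le (by simp), ?_⟩
      change (sstep [] (W (t0 + (0 : ℕ)))).head? = _
      rw [Nat.cast_zero, add_zero, sstep, if_neg (by simp)]; rfl
    obtain ⟨i, h1, h2, h3, h4⟩ := ih j (by omega)
    have es : srun W [] t0 (1 + (j + 1)) = sstep (srun W [] t0 (1 + j)) (W (t0 + 1 + j)) := by
      change sstep (srun W [] t0 (1 + j)) (W (t0 + ((1 + j : ℕ) : ℤ))) = _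
      push_cast; rw [add_assoc]
    by_cases hO : AOut S M (t0 + 1 + j)
    · refine ⟨t0 + 1 + j, by push_cast; omega, hO, AClosed.of_le (by push_cast; omega), ?_⟩
      rw [es, push _ i _ h1 h2 h3 h4 hO]; rfl
    · obtain ⟨r, hr⟩ := A.not_out_iff.1 hO
      have hlt := A.lt hr
      have hr0 : t0 < r := by
        by_contra hc
        exact A.nS hr (by omega) (by omega) h0
      obtain ⟨b, rfl⟩ : ∃ b : ℕ, r = t0 + 1 + b := ⟨(r - t0 - 1).toNat, by omega⟩
      obtain ⟨i', g1, g2, g3, g4⟩ := ih b (by omega)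
      have hfull := g3.append (A.closed_full hr) (by omega) (by omega)
      refine ⟨i', by push_cast; omega, g2, by convert hfull using 1; push_cast; ring, ?_⟩
      obtain ⟨c, rfl⟩ : ∃ c : ℕ, j = b + 1 + c := ⟨j - b - 1, by omega⟩
      have e : 1 + (b + 1 + c + 1) = (1 + b) + (1 + c) + 1 := by ring
      have hro : AOut S M (t0 + 1 + b) := Or.inr ⟨_, hr⟩
      have e1 : srun W [] t0 (1 + b + 1) = W (t0 + 1 + b) :: srun W [] t0 (1 + b) := by
        change sstep (srun W [] t0 (1 + b)) (W (t0 + ((1 + b : ℕ) : ℤ))) = _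
        push_cast
        rw [← add_assoc, push _ i' _ g1 g2 g3 g4 hro]
      have e2 : srun W [] t0 (1 + b + (1 + c)) = W (t0 + 1 + b) :: srun W [] t0 (1 + b) := by
        rw [← add_assoc, srun_add, e1]
        refine srun_closed A C c (t0 + 1 + b) _ _ (by push_cast; omega) hro ?_ ?_ rfl
        · exact AClosed.of_le (by push_cast; omega)
        · have := A.interior hr
          convert this using 1 <;> push_cast <;> ring
      rw [e]
      change (sstep (srun W [] t0 (1 + b + (1 + c))) (W (t0 + ((1 + b + (1 + c) : ℕ) : ℤ)))).head?
        = _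
      have e3 : t0 + ((1 + b + (1 + c) : ℕ) : ℤ) = t0 + 1 + ((b + 1 + c : ℕ) : ℤ) := by
        push_cast; ring
      rw [e2, e3, sstep, if_pos]
      · exact g4
      · rw [C.pair hr, linv_linv]; rfl

/-- Started at a through string, the stack pushes exactly at the outward points. -/
lemma out_iff_srun {t0 : ℤ} (h0 : S t0) (j : ℕ) :
    AOut S M (t0 + 1 + j) ↔
      (srun W [] t0 (1 + j)).head? ≠ some (linv (W (t0 + 1 + j))) := by
  obtain ⟨i, h1, h2, h3, h4⟩ := srun_head A C h0 j
  rw [h4]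
  constructor
  · intro h h'
    exact C.cover h1 h2 h h3 (Option.some.inj h')
  · intro h
    by_contra hO
    obtain ⟨r, hr⟩ := A.not_out_iff.1 hO
    have := A.arc_start h2 h1 h3 hr
    subst this
    apply h
    rw [C.pair hr, linv_linv]

lemma srun_length {t0 : ℤ} (h0 : S t0) (j : ℕ) :
    ((srun W [] t0 j).length : ℤ) = ht (AOut S M) (t0 + j) - ht (AOut S M) t0 := by
  induction j with
  | zero => simp [srun]
  | succ j ih =>
    have e : t0 + ((j + 1 : ℕ) : ℤ) = t0 + j + 1 := by push_cast; ring
    change ((sstep (srun W [] t0 j) (W (t0 + j))).length : ℤ) = _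
    have key : AOut S M (t0 + j) ↔ (srun W [] t0 j).head? ≠ some (linv (W (t0 + j))) := by
      rcases j with _ | j
      · simp [srun, AOut, h0]
      · have := out_iff_srun A C h0 j
        rw [show t0 + ((j + 1 : ℕ) : ℤ) = t0 + 1 + j by push_cast; ring, add_comm j 1]
        exact this
    rw [e, sstep]
    by_cases h : (srun W [] t0 j).head? = some (linv (W (t0 + j)))
    · rw [if_pos h, ht_succ_of_not (by rw [key]; simpa using h)]
      have : (srun W [] t0 j) ≠ [] := by
        intro h'; rw [h'] at h; simp at h
      have := List.length_pos_iff.2 this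
      rw [List.length_tail]; omega
    · rw [if_neg h, ht_succ_of (by rw [key]; exact h)]
      simp; omega

end

/-- Runs from two stacks keep a common top part, and the total size of what lies below it never
grows. -/
lemma srun_merge (T T' : List (Letter N)) (a : ℤ) (j : ℕ) :
    ∃ U D E : List (Letter N), srun W T a j = U ++ D ∧ srun W T' a j = U ++ E ∧
      D.length + E.length ≤ T.length + T'.length := by
  induction j with
  | zero => exact ⟨[], T, T', rfl, rfl, le_rfl⟩
  | succ j ih =>
    obtain ⟨U, D, E, h1, h2, h3⟩ := ih
    change ∃ U D E : List (Letter N), sstep _ (W (a + j)) = _ ∧ sstep _ (W (a + j)) = _ ∧ _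
    rw [h1, h2]
    generalize W (a + j) = l
    rcases U with _ | ⟨x, U⟩
    · simp only [List.nil_append, sstep]
      split_ifs with hD hE hE
      · exact ⟨[], D.tail, E.tail, rfl, rfl, by simp only [List.length_tail]; omega⟩
      · refine ⟨[], D.tail, l :: E, rfl, rfl, ?_⟩
        have : D ≠ [] := by rintro rfl; simp at hD
        have := List.length_pos_iff.2 this
        simp only [List.length_tail, List.length_cons]; omega
      · refine ⟨[], l :: D, E.tail, rfl, rfl, ?_⟩
        have : E ≠ [] := by rintro rfl; simp at hE
        have := List.length_pos_iff.2 this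
        simp only [List.length_tail, List.length_cons]; omega
      · exact ⟨[l], D, E, rfl, rfl, h3⟩
    · have e : ∀ F : List (Letter N), sstep (x :: U ++ F) l =
          if x = linv l then U ++ F else l :: x :: U ++ F := by
        intro F
        by_cases h : x = linv l <;> simp [sstep, h]
      rw [e, e]
      split_ifs
      · exact ⟨U, D, E, rfl, rfl, h3⟩
      · exact ⟨l :: x :: U, D, E, rfl, rfl, h3⟩

/-- A periodic word determines the outward points of a compatible arc diagram. -/
lemma out_unique {n : ℤ} {S S' : ℤ → Prop} {M M' : ℤ → ℤ → Prop} (A : Arcs n S M)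
    (A' : Arcs n S' M') (C : Compat S M W) (C' : Compat S' M' W)
    (hk : 0 < ht (AOut S' M') n) (t : ℤ) : AOut S M t ↔ AOut S' M' t := by
  obtain ⟨t0, h0⟩ := A.exS
  obtain ⟨t1, h01, -, h1⟩ := A'.exists_S_Ico (t0 + 1)
  obtain ⟨d, rfl⟩ : ∃ d : ℕ, t1 = t0 + (d + 1 : ℕ) := ⟨(t1 - t0 - 1).toNat, by omega⟩
  set T := srun W [] t0 (d + 1) with hT
  -- choose a translate of `t` so far right that the second stack outgrows the discrepancy
  obtain ⟨B, hB⟩ := exists_ht_gt A'.pos A'.perOut hk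
    (T.length + ht (AOut S' M') (t0 + (d + 1 : ℕ)))
  have hn := A.pos
  obtain ⟨q, hq⟩ : ∃ q : ℤ, |t0 + (d + 1 : ℕ) + 1| + |B| ≤ t + q * n := by
    refine ⟨abs (|t0 + (d + 1 : ℕ) + 1| + |B| - t), ?_⟩
    have h2 := le_abs_self (|t0 + (d + 1 : ℕ) + 1| + |B| - t)
    have h3 := abs_nonneg (|t0 + (d + 1 : ℕ) + 1| + |B| - t)
    nlinarith
  rw [← per_mul A.perOut q t, ← per_mul A'.perOut q t]
  have hB0 := abs_nonneg B
  have hB1 := le_abs_self B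
  have hB2 := abs_nonneg (t0 + (d + 1 : ℕ) + 1)
  have hB3 := le_abs_self (t0 + (d + 1 : ℕ) + 1)
  obtain ⟨j, hj⟩ : ∃ j : ℕ, t + q * n = t0 + (d + 1 : ℕ) + 1 + j :=
    ⟨(t + q * n - (t0 + (d + 1 : ℕ) + 1)).toNat, by omega⟩
  have k1 := out_iff_srun A C h0 (d + 1 + j)
  have k2 := out_iff_srun A' C' h1 j
  have e : t0 + 1 + ((d + 1 + j : ℕ) : ℤ) = t0 + (d + 1 : ℕ) + 1 + j := by push_cast; ring
  rw [e] at k1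
  rw [hj, k1, k2]
  obtain ⟨U, D, E, m1, m2, m3⟩ := srun_merge (W := W) T [] (t0 + (d + 1 : ℕ)) (1 + j)
  have m0 : srun W [] t0 (1 + (d + 1 + j)) = U ++ D := by
    rw [← m1, hT, ← srun_add]; congr 1; ring
  have hl := srun_length A' C' h1 (1 + j)
  have hb := hB (t0 + (d + 1 : ℕ) + (1 + j : ℕ)) (by push_cast at *; omega)
  have hU : U ≠ [] := by
    rintro rfl
    rw [m2] at hl
    simp only [List.nil_append, List.length_nil] at hl m3
    omega
  obtain ⟨x, U', rfl⟩ := List.exists_cons_of_ne_nil hU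
  rw [m0, m2]
  simp

/-! ### From the circle to the integers -/

/-- The covering map from `ℤ` to the circle `[n]`. -/
def pr (n : ℕ) [NeZero n] (t : ℤ) : Fin n :=
  ⟨(t % n).toNat, by
    have h : (0 : ℤ) < n := by exact_mod_cast Nat.pos_of_ne_zero (NeZero.ne n)
    have h1 := Int.emod_nonneg t h.ne'
    have h2 := Int.emod_lt_of_pos t h
    omega⟩

section pr
variable {n : ℕ} [NeZero n]

lemma n_pos : (0 : ℤ) < n := by exact_mod_cast Nat.pos_of_ne_zero (NeZero.ne n)

lemma pr_val (t : ℤ) : ((pr n t).val : ℤ) = t % n := by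
  have h1 := Int.emod_nonneg t (n_pos (n := n)).ne'
  change (((t % n).toNat : ℕ) : ℤ) = _
  omega

lemma pr_eq_iff {a b : ℤ} : pr n a = pr n b ↔ a % n = b % n := by
  rw [Fin.ext_iff, ← pr_val, ← pr_val]; omega

lemma pr_add_mul (t q : ℤ) : pr n (t + q * n) = pr n t := by
  rw [pr_eq_iff, Int.add_mul_emod_self_right]

lemma pr_add (t : ℤ) : pr n (t + n) = pr n t := by
  have := pr_add_mul (n := n) t 1; rwa [one_mul] at this

lemma pr_sub (t : ℤ) : pr n (t - n) = pr n t := by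
  rw [← pr_add (t - n), sub_add_cancel]

lemma pr_coe (x : Fin n) : pr n (x.val : ℤ) = x := by
  apply Fin.ext
  have h := pr_val (n := n) (x.val : ℤ)
  rw [Int.emod_eq_of_lt (by omega) (by have := x.2; omega)] at h
  omega

lemma pr_val_of_lt {t : ℤ} (h0 : 0 ≤ t) (h1 : t < n) : ((pr n t).val : ℤ) = t := by
  rw [pr_val, Int.emod_eq_of_lt h0 h1]

lemma exists_lift (a : ℤ) (x : Fin n) : ∃ t, a ≤ t ∧ t < a + n ∧ pr n t = x := by
  refine ⟨a + (x.val - a) % n, ?_, ?_, ?_⟩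
  · have := Int.emod_nonneg ((x.val : ℤ) - a) (n_pos (n := n)).ne'; omega
  · have := Int.emod_lt_of_pos ((x.val : ℤ) - a) (n_pos (n := n)); omega
  · conv_rhs => rw [← pr_coe x]
    rw [pr_eq_iff, Int.add_emod_emod]
    congr 1; ring

lemma pr_eq_shift {a b : ℤ} (h : pr n a = pr n b) : ∃ q : ℤ, a = b + q * n := by
  rw [pr_eq_iff] at h
  have h1 := Int.emod_add_mul_ediv a n
  have h2 := Int.emod_add_mul_ediv b n
  refine ⟨a / n - b / n, ?_⟩
  rw [h] at h1
  linarith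

lemma pr_inj {a s t : ℤ} (hs : a ≤ s) (hs' : s < a + n) (ht : a ≤ t) (ht' : t < a + n)
    (h : pr n s = pr n t) : s = t := by
  rw [pr_eq_iff] at h
  have h1 : (n : ℤ) ∣ s - t := Int.dvd_of_emod_eq_zero (Int.emod_eq_emod_iff_emod_sub_eq_zero.1 h)
  have := Int.eq_zero_of_abs_lt_dvd h1 (by rw [abs_lt]; constructor <;> omega)
  omega

lemma cyc_dist {a x : ℤ} (h : a ≤ x) (h' : x < a + n) :
    ((((pr n x).val + n - (pr n a).val) % n : ℕ) : ℤ) = x - a := by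
  have h1 := (pr n a).2
  push_cast [Nat.cast_sub (show (pr n a).val ≤ (pr n x).val + n by omega)]
  rw [pr_val, pr_val]
  have : (x % n + n - a % n) % (n : ℤ) = (x - a) % n := by
    rw [Int.sub_emod, Int.add_emod_right, Int.emod_emod, Int.emod_emod, ← Int.sub_emod]
  rw [this, Int.emod_eq_of_lt (by omega) (by omega)]

lemma inCyc_iff {a b x : ℤ} (hb : a ≤ b) (hb' : b < a + n) (hx : a ≤ x) (hx' : x < a + n) :
    InCyc (pr n a) (pr n b) (pr n x) ↔ x ≤ b := by
  unfold InCyc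
  have h1 := cyc_dist hb hb'
  have h2 := cyc_dist hx hx'
  omega

lemma cnext_pr (t : ℤ) : cnext (pr n t) = pr n (t + 1) := by
  apply Fin.ext
  have h : (((cnext (pr n t)).val : ℕ) : ℤ) = (pr n (t + 1)).val := by
    simp only [cnext]
    push_cast
    rw [pr_val, pr_val, Int.emod_add_emod]
  exact_mod_cast h

lemma cprev_pr (t : ℤ) : cprev (pr n t) = pr n (t - 1) := by
  apply Fin.ext
  have hn := n_pos (n := n)
  have h : (((cprev (pr n t)).val : ℕ) : ℤ) = (pr n (t - 1)).val := by
    simp only [cprev]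
    push_cast [Nat.cast_sub (show 1 ≤ (pr n t).val + n by omega)]
    rw [pr_val, pr_val, show t % n + (n : ℤ) - 1 = (t % n + (-1)) + n by ring,
      Int.add_emod_right, Int.emod_add_emod]
    congr 1
  exact_mod_cast h

/-- Non-crossing is a cyclic condition: it may be tested on lifts of the four points. -/
lemma nc_cyc {R : Fin n → Fin n → Prop} (hR : NonCrossingRel R) (hs : ∀ x y, R x y → R y x)
    (htr : ∀ x y z, R x y → R y z → R x z) {a b c d : ℤ} (hab : a < b) (hbc : b < c)
    (hcd : c < d) (hda : d < a + n) (h1 : R (pr n a) (pr n c)) (h2 : R (pr n b) (pr n d)) :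
    R (pr n a) (pr n b) := by
  have key : ∀ {a b c d : ℤ}, 0 ≤ a → a < n → a < b → b < c → c < d → d < a + n →
      R (pr n a) (pr n c) → R (pr n b) (pr n d) → R (pr n a) (pr n b) := by
    clear hab hbc hcd hda h1 h2 a b c d
    intro a b c d ha0 han hab hbc hcd hda h1 h2
    have va := pr_val_of_lt ha0 han
    rcases lt_or_ge b n with hb | hb
    · have vb := pr_val_of_lt (show 0 ≤ b by omega) hb
      rcases lt_or_ge c n with hc | hc
      · have vc := pr_val_of_lt (show 0 ≤ c by omega) hc
        rcases lt_or_ge d n with hd | hd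
        · have vd := pr_val_of_lt (show 0 ≤ d by omega) hd
          exact hR _ _ _ _ (by omega) (by omega) (by omega) h1 h2
        · have vd := pr_val_of_lt (n := n) (show 0 ≤ d - n by omega) (by omega)
          rw [pr_sub] at vd
          have h3 := hR (pr n d) (pr n a) (pr n b) (pr n c) (by omega) (by omega) (by omega)
            (hs _ _ h2) h1
          exact hs _ _ (htr _ _ _ h2 h3)
      · have vc := pr_val_of_lt (n := n) (show 0 ≤ c - n by omega) (by omega)
        have vd := pr_val_of_lt (n := n) (show 0 ≤ d - n by omega) (by omega)
        rw [pr_sub] at vc vd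
        have h3 := hR (pr n c) (pr n d) (pr n a) (pr n b) (by omega) (by omega) (by omega)
          (hs _ _ h1) (hs _ _ h2)
        exact htr _ _ _ h1 (htr _ _ _ h3 (hs _ _ h2))
    · have vb := pr_val_of_lt (n := n) (show 0 ≤ b - n by omega) (by omega)
      have vc := pr_val_of_lt (n := n) (show 0 ≤ c - n by omega) (by omega)
      have vd := pr_val_of_lt (n := n) (show 0 ≤ d - n by omega) (by omega)
      rw [pr_sub] at vb vc vd
      have h3 := hR (pr n b) (pr n c) (pr n d) (pr n a) (by omega) (by omega) (by omega)
        h2 (hs _ _ h1)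
      exact htr _ _ _ h1 (hs _ _ h3)
  have hn := n_pos (n := n)
  have h3 := Int.emod_nonneg a hn.ne'
  have h4 := Int.emod_lt_of_pos a hn
  have h5 : a % n = a + (-(a / n)) * n := by
    have := Int.emod_add_mul_ediv a n; linarith
  have := @key (a + (-(a / n)) * n) (b + (-(a / n)) * n) (c + (-(a / n)) * n)
    (d + (-(a / n)) * n) (by omega) (by omega) (by omega) (by omega) (by omega) (by omega)
  simp only [pr_add_mul] at this
  exact this h1 h2

end pr

section blocks
variable {n : ℕ} {P : Finpartition (Finset.univ : Finset (Fin n))}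

lemma Rel.refl (i : Fin n) : Rel P i i := by
  obtain ⟨B, hB, h⟩ := P.exists_mem (Finset.mem_univ i)
  exact ⟨B, hB, h, h⟩

lemma Rel.symm {i j : Fin n} (h : Rel P i j) : Rel P j i := by
  obtain ⟨B, hB, h1, h2⟩ := h; exact ⟨B, hB, h2, h1⟩

lemma Rel.trans {i j k : Fin n} (h : Rel P i j) (h' : Rel P j k) : Rel P i k := by
  obtain ⟨B, hB, h1, h2⟩ := h
  obtain ⟨B', hB', h1', h2'⟩ := h'
  have := P.eq_of_mem_parts hB hB' h2 h1'
  subst this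
  exact ⟨B, hB, h1, h2'⟩

lemma IsSingleton.eq {i j : Fin n} (h : IsSingleton P i) (h' : Rel P i j) : i = j := by
  obtain ⟨B, hB, h1, h2⟩ := h
  obtain ⟨B', hB', h1', h2'⟩ := h'
  have := P.eq_of_mem_parts hB hB' h1 h1'
  subst this
  obtain ⟨x, rfl⟩ := Finset.card_eq_one.1 h2
  simp at h1 h2'; rw [h1, h2']

lemma isSingleton_iff {i : Fin n} : IsSingleton P i ↔ ∀ j, Rel P i j → i = j := by
  constructor
  · intro h j; exact h.eq
  · intro h
    obtain ⟨B, hB, h1⟩ := P.exists_mem (Finset.mem_univ i)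
    refine ⟨B, hB, h1, Finset.card_eq_one.2 ⟨i, ?_⟩⟩
    ext j
    simp only [Finset.mem_singleton]
    constructor
    · intro hj; exact (h j ⟨B, hB, h1, hj⟩).symm
    · rintro rfl; exact h1

lemma relTilde_symm {i j : Fin n} (h : RelTilde P i j) : RelTilde P j i := by
  rcases h with h | h
  · exact Or.inl h.symm
  · exact Or.inr ⟨h.2, h.1⟩

lemma relTilde_trans {i j k : Fin n} (h : RelTilde P i j) (h' : RelTilde P j k) :
    RelTilde P i k := by
  rcases h with h | h <;> rcases h' with h' | h'
  · exact Or.inl (h.trans h')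
  · have := h'.1.eq h.symm; subst this; exact Or.inr h'
  · have := h.2.eq h'; subst this; exact Or.inr h
  · exact Or.inr ⟨h.1, h'.2⟩

end blocks

section pairs
variable {n : ℕ} (π : HalfPairing n)

lemma Pairs.symm {π : HalfPairing n} {i j : Fin n} (h : Pairs π i j) : Pairs π j i :=
  ⟨h.1.symm, h.2.symm⟩

lemma Pairs.unique {π : HalfPairing n} {i j k : Fin n} (h : Pairs π i j) (h' : Pairs π i k) :
    j = k := by
  obtain ⟨h0, B, hB, h1, h2⟩ := h
  obtain ⟨h0', B', hB', h1', h2'⟩ := h'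
  have := π.P.eq_of_mem_parts hB hB' h1 h1'
  subst this
  by_contra hne
  have := π.card_le B hB
  have : 2 < B.card := Finset.two_lt_card.2 ⟨i, h1, j, h2, k, h2', h0, h0', hne⟩
  omega

lemma Pairs.not_single {π : HalfPairing n} {i j : Fin n} (h : Pairs π i j) :
    ¬ IsSingleton π.P i := fun hs => h.1 (hs.eq h.2)

lemma exists_pair {π : HalfPairing n} {i : Fin n} (h : ¬ IsSingleton π.P i) :
    ∃ j, Pairs π i j := by
  rw [isSingleton_iff] at h
  push Not at h
  obtain ⟨j, h1, h2⟩ := h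
  exact ⟨j, h2, h1⟩

end pairs

section lift
variable {n : ℕ} [NeZero n] (π : HalfPairing n)

/-- Lift of the through strings of `π`. -/
def liftS (t : ℤ) : Prop := IsSingleton π.P (pr n t)

/-- Lift of the pairs of `π`, each directed along the arc of the circle free of through
strings. -/
def liftM (r s : ℤ) : Prop :=
  r < s ∧ s < r + n ∧ Pairs π (pr n r) (pr n s) ∧
    ∀ x, r ≤ x → x ≤ s → ¬ IsSingleton π.P (pr n x)

lemma lift_total (t : ℤ) : liftS π t ∨ (∃ s, liftM π t s) ∨ ∃ r, liftM π r t := by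
  by_cases hS : liftS π t
  · exact Or.inl hS
  refine Or.inr ?_
  obtain ⟨y, hy⟩ := exists_pair hS
  obtain ⟨s, h1, h2, rfl⟩ := exists_lift t y
  have hne : s ≠ t := by rintro rfl; exact hy.1 rfl
  by_cases h3 : ∀ x, t ≤ x → x ≤ s → ¬ IsSingleton π.P (pr n x)
  · exact Or.inl ⟨s, by omega, h2, hy, h3⟩
  refine Or.inr ⟨s - n, by omega, by omega, ?_, ?_⟩
  · rw [pr_sub]; exact hy.symm
  intro x' hx1 hx2 hx3
  push Not at h3
  obtain ⟨x, h4, h5, h6⟩ := h3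
  have n1 : x ≠ t := by rintro rfl; exact hS h6
  have n2 : x ≠ s := by rintro rfl; exact hy.symm.not_single h6
  have n3 : x' ≠ t := by rintro rfl; exact hS hx3
  have n4 : x' ≠ s - n := by rintro rfl; rw [pr_sub] at hx3; exact hy.symm.not_single hx3
  have h7 := nc_cyc π.nc_tilde (fun _ _ => relTilde_symm) (fun _ _ _ => relTilde_trans)
    (show x' < t by omega) (show t < x by omega) (show x < s by omega) (by omega)
    (Or.inr ⟨hx3, h6⟩) (Or.inl hy.2)
  rcases h7 with h7 | h7
  · rw [hx3.eq h7] at hx3; exact hS hx3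
  · exact hS h7.2

/-- The lift of a half-pairing is an arc diagram. -/
lemma arcs_lift : Arcs n (liftS π) (liftM π) where
  pos := n_pos
  lt := fun h => h.1
  nS := fun h h1 h2 => h.2.2.2 _ h1 h2
  right_unique := by
    rintro r s s' ⟨h1, h2, h3, -⟩ ⟨h1', h2', h3', -⟩
    exact pr_inj h1.le h2 h1'.le h2' (h3.unique h3')
  left_unique := by
    rintro r r' s ⟨h1, h2, h3, -⟩ ⟨h1', h2', h3', -⟩
    exact pr_inj (a := s - n + 1) (by omega) (by omega) (by omega) (by omega)
      (h3.symm.unique h3'.symm)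
  not_both := by
    rintro r s t ⟨h1, h2, h3, h4⟩ ⟨h1', h2', h3', h4'⟩
    have h5 := h3.symm.unique h3'
    rw [← pr_add r] at h5
    have h6 := pr_inj (a := s) (by omega) (by omega) (by omega) (by omega) h5
    obtain ⟨x, hx⟩ := π.exists_singleton
    obtain ⟨x, hx1, hx2, rfl⟩ := exists_lift r x
    rcases le_or_gt x s with h7 | h7
    · exact h4 x hx1 h7 hx
    · exact h4' x h7.le (by omega) hx
  total := lift_total π
  nc := by
    rintro r s r' s' ⟨h1, h2, h3, h4⟩ ⟨h1', h2', h3', h4'⟩ hr hs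
    by_contra hc
    have hle : s' < r + n := by
      by_contra hc'
      obtain ⟨x, hx⟩ := π.exists_singleton
      obtain ⟨x, hx1, hx2, rfl⟩ := exists_lift r x
      rcases le_or_gt x s with h7 | h7
      · exact h4 x hx1 h7 hx
      · exact h4' x (by omega) (by omega) hx
    rcases eq_or_ne s s' with h5 | h5
    · subst h5
      have := pr_inj (a := s - n + 1) (by omega) (by omega) (by omega) (by omega)
        (h3.symm.unique h3'.symm)
      omega
    have h7 := nc_cyc π.nc_tilde (fun _ _ => relTilde_symm) (fun _ _ _ => relTilde_trans)
      hr hs (show s < s' by omega) hle (Or.inl h3.2) (Or.inl h3'.2)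
    rcases h7 with h7 | h7
    · have hne : pr n r ≠ pr n r' := fun h =>
        hr.ne (pr_inj (a := r) (by omega) (by omega) (by omega) (by omega) h)
      have := h3.unique ⟨hne, h7⟩
      exact hs.ne' (pr_inj (a := r) (by omega) (by omega) (by omega) (by omega) this)
    · exact h3.not_single h7.1
  perS := fun t => by unfold liftS; rw [pr_add]
  perM := fun r s => by
    unfold liftM
    rw [pr_add, pr_add]
    refine and_congr (by omega) (and_congr (by omega) (and_congr Iff.rfl ?_))
    constructor
    · intro h x h1 h2
      have := h (x + n) (by omega) (by omega)
      rwa [pr_add] at this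
    · intro h x h1 h2
      have := h (x - n) (by omega) (by omega)
      rwa [pr_sub] at this
  exS := by
    obtain ⟨x, hx⟩ := π.exists_singleton
    exact ⟨x.val, by unfold liftS; rwa [pr_coe]⟩

lemma outOriented_iff (t : ℤ) : OutOriented π (pr n t) ↔ AOut (liftS π) (liftM π) t := by
  refine or_congr Iff.rfl ?_
  constructor
  · rintro ⟨y, hy, h⟩
    obtain ⟨s, h1, h2, rfl⟩ := exists_lift t y
    have hne : s ≠ t := by rintro rfl; exact hy.1 rfl
    exact ⟨s, by omega, h2, hy, fun x hx hx' =>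
      h _ ((inCyc_iff h1 h2 hx (by omega)).2 hx')⟩
  · rintro ⟨s, h1, h2, h3, h4⟩
    refine ⟨_, h3, fun y hy => ?_⟩
    obtain ⟨x, hx, hx', rfl⟩ := exists_lift t y
    exact h4 x hx ((inCyc_iff h1.le h2 hx hx').1 hy)

/-- On lifts, `i` covers `j` when the points strictly between are matched among themselves. -/
lemma covers_iff (x : Fin n) (j : ℤ) : Covers π x (pr n j) ↔
    AOut (liftS π) (liftM π) j ∧ ∃ i, i < j ∧ pr n i = x ∧ AOut (liftS π) (liftM π) i ∧
      AClosed (liftM π) (i + 1) j := by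
  have A := arcs_lift π
  have hn := n_pos (n := n)
  constructor
  · rintro ⟨h1, h2, h3⟩
    refine ⟨(outOriented_iff π j).1 h2, ?_⟩
    obtain ⟨i, hi, hi', rfl⟩ := exists_lift (j - n) x
    refine ⟨i, by omega, rfl, (outOriented_iff π i).1 h1, ?_⟩
    rw [cnext_pr, cprev_pr] at h3
    rcases h3 with h3 | h3
    · have := pr_inj (a := j - n + 1) (by omega) (by omega) (by omega) (by omega) h3
      exact AClosed.of_le (by omega)
    · rcases le_or_gt j (i + 1) with h4 | h4
      · exact AClosed.of_le h4
      intro t ht ht'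
      have hns : ∀ x, i + 1 ≤ x → x ≤ j - 1 → ¬ IsSingleton π.P (pr n x) := by
        intro x hx hx'
        obtain ⟨y, -, -, hy⟩ := h3 _ ((inCyc_iff (show i + 1 ≤ j - 1 by omega) (by omega) hx
          (by omega)).2 hx')
        exact hy.not_single
      obtain ⟨y, hne, hy, hp⟩ := h3 _ ((inCyc_iff (show i + 1 ≤ j - 1 by omega) (by omega) ht
          (by omega)).2 (by omega))
      obtain ⟨u, hu, hu', rfl⟩ := exists_lift (i + 1) y
      have hu2 := (inCyc_iff (show i + 1 ≤ j - 1 by omega) (by omega) hu hu').1 hy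
      refine ⟨u, hu, by omega, ?_⟩
      rcases lt_trichotomy t u with h5 | h5 | h5
      · exact Or.inl ⟨h5, by omega, hp, fun x hx hx' => hns x (by omega) (by omega)⟩
      · subst h5; exact absurd rfl hne
      · exact Or.inr ⟨h5, by omega, hp.symm, fun x hx hx' => hns x (by omega) (by omega)⟩
  · rintro ⟨h1, i, h2, rfl, h3, h4⟩
    refine ⟨(outOriented_iff π i).2 h3, (outOriented_iff π j).2 h1, ?_⟩
    have hlt := A.closed_lt h4
    rw [cnext_pr, cprev_pr]
    rcases eq_or_ne j (i + 1) with h5 | h5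
    · left; rw [h5]
    right
    intro y hy
    obtain ⟨t, ht, ht', rfl⟩ := exists_lift (i + 1) y
    have ht2 := (inCyc_iff (show i + 1 ≤ j - 1 by omega) (by omega) ht ht').1 hy
    obtain ⟨u, hu, hu', hM⟩ := h4 t ht (by omega)
    have hp : Pairs π (pr n t) (pr n u) := by
      rcases hM with hM | hM
      · exact hM.2.2.1
      · exact hM.2.2.1.symm
    exact ⟨_, hp.1.symm, (inCyc_iff (show i + 1 ≤ j - 1 by omega) (by omega) hu (by omega)).2
      (by omega), hp⟩

end lift

/-! ### Half-pairings and their sets of inward points -/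

section
variable {n : ℕ} (π : HalfPairing n)

lemma out_of_single {x : Fin n} (h : IsSingleton π.P x) : OutOriented π x := Or.inl h

lemma throughFinset_pos : 0 < (throughFinset π).card := by
  obtain ⟨x, hx⟩ := π.exists_singleton
  exact Finset.card_pos.2 ⟨x, by simp [throughFinset, hx]⟩

variable [NeZero n]

lemma pairs_iff {x y : Fin n} : Pairs π x y ↔
    ∃ r s, ((pr n r = x ∧ pr n s = y) ∨ (pr n s = x ∧ pr n r = y)) ∧ liftM π r s := by
  constructor
  · intro h
    obtain ⟨t, -, -, rfl⟩ := exists_lift 0 x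
    rcases lift_total π t with h1 | ⟨s, h1⟩ | ⟨r, h1⟩
    · exact absurd h1 h.not_single
    · exact ⟨t, s, Or.inl ⟨rfl, h1.2.2.1.unique h⟩, h1⟩
    · exact ⟨r, t, Or.inr ⟨rfl, h1.2.2.1.symm.unique h⟩, h1⟩
  · rintro ⟨r, s, ⟨rfl, rfl⟩ | ⟨rfl, rfl⟩, h⟩
    · exact h.2.2.1
    · exact h.2.2.1.symm

lemma pair_out {x y : Fin n} (h : Pairs π x y) : OutOriented π x ↔ ¬ OutOriented π y := by
  have A := arcs_lift π
  obtain ⟨r, s, h1 | h1, h2⟩ := (pairs_iff π).1 h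
  · obtain ⟨rfl, rfl⟩ := h1
    rw [outOriented_iff, outOriented_iff, A.not_out_iff]
    exact ⟨fun _ => ⟨_, h2⟩, fun _ => Or.inr ⟨_, h2⟩⟩
  · obtain ⟨rfl, rfl⟩ := h1
    rw [outOriented_iff, outOriented_iff]
    have h3 := A.not_out_iff.2 ⟨_, h2⟩
    have h4 : AOut (liftS π) (liftM π) r := Or.inr ⟨_, h2⟩
    tauto

/-- The set of inward oriented points. -/
noncomputable def inSet : Finset (Fin n) := Finset.univ.filter (fun x => ¬ OutOriented π x)

/-- The set of outward oriented points that belong to a pair. -/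
noncomputable def opSet : Finset (Fin n) :=
  Finset.univ.filter (fun x => OutOriented π x ∧ ¬ IsSingleton π.P x)

lemma card_opSet : (opSet π).card = (inSet π).card := by
  have hsel : ∀ x : Fin n, ∃ y, ¬ IsSingleton π.P x → Pairs π x y := by
    intro x
    by_cases h : IsSingleton π.P x
    · exact ⟨x, fun h' => absurd h h'⟩
    · obtain ⟨y, hy⟩ := exists_pair h; exact ⟨y, fun _ => hy⟩
  choose f hf using hsel
  have hns : ∀ x, ¬ OutOriented π x → ¬ IsSingleton π.P x := fun x h h' =>
    h (out_of_single π h')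
  refine Finset.card_bij (fun x _ => f x) ?_ ?_ ?_
  · intro x hx
    simp only [opSet, inSet, Finset.mem_filter, Finset.mem_univ, true_and] at hx ⊢
    exact (pair_out π (hf x hx.2)).1 hx.1
  · intro x hx y hy hxy
    simp only [opSet, Finset.mem_filter, Finset.mem_univ, true_and] at hx hy
    have h1 := hf x hx.2
    have h2 := hf y hy.2
    change f x = f y at hxy
    rw [hxy] at h1
    exact h1.symm.unique h2.symm
  · intro y hy
    simp only [inSet, Finset.mem_filter, Finset.mem_univ, true_and] at hy
    have h1 := hf y (hns y hy)
    refine ⟨f y, ?_, ?_⟩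
    · simp only [opSet, Finset.mem_filter, Finset.mem_univ, true_and]
      exact ⟨(pair_out π h1.symm).2 hy, h1.symm.not_single⟩
    · exact (hf _ h1.symm.not_single).unique h1.symm

lemma card_total : (throughFinset π).card + 2 * (inSet π).card = n := by
  have h1 : (throughFinset π).card + (opSet π).card + (inSet π).card = n := by
    have e1 : Disjoint (throughFinset π) (opSet π) := by
      rw [Finset.disjoint_left]
      intro x hx hx'
      simp only [throughFinset, opSet, Finset.mem_filter, Finset.mem_univ, true_and] at hx hx'
      exact hx'.2 hx
    have e2 : Disjoint (throughFinset π ∪ opSet π) (inSet π) := by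
      rw [Finset.disjoint_left]
      intro x hx hx'
      simp only [throughFinset, opSet, inSet, Finset.mem_union, Finset.mem_filter,
        Finset.mem_univ, true_and] at hx hx'
      rcases hx with hx | hx
      · exact hx' (out_of_single π hx)
      · exact hx' hx.1
    rw [← Finset.card_union_of_disjoint e1, ← Finset.card_union_of_disjoint e2]
    have : throughFinset π ∪ opSet π ∪ inSet π = Finset.univ := by
      ext x
      simp only [throughFinset, opSet, inSet, Finset.mem_union, Finset.mem_filter,
        Finset.mem_univ, true_and, iff_true]
      tauto
    rw [this, Finset.card_univ, Fintype.card_fin]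
  rw [card_opSet] at h1
  omega

lemma ht_pr (Q : Fin n → Prop) : ht (fun t => Q (pr n t)) n =
    n - 2 * ((Finset.univ.filter (fun x => ¬ Q x)).card : ℤ) := by
  rw [ht_natCast, Finset.sum_range]
  simp only [pr_coe]
  rw [Finset.sum_ite]
  have h := Finset.card_filter_add_card_filter_not (s := (Finset.univ : Finset (Fin n))) Q
  rw [Finset.card_univ, Fintype.card_fin] at h
  simp only [Finset.sum_const, nsmul_eq_mul, mul_one, mul_neg]
  have h' : (Finset.univ.filter (fun x => Q x)).card +
      (Finset.univ.filter (fun x => ¬ Q x)).card = n := by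
    convert h
  omega

lemma drift_pos : 0 < ht (AOut (liftS π) (liftM π)) n := by
  have h : AOut (liftS π) (liftM π) = fun t => OutOriented π (pr n t) := by
    funext t; rw [outOriented_iff]
  rw [h, ht_pr]
  have h1 := card_total π
  have h2 := throughFinset_pos π
  unfold inSet at h1
  omega

/-- A half-pairing is determined by its orientation. -/
lemma eq_of_out {π π' : HalfPairing n}
    (h : ∀ t, AOut (liftS π) (liftM π) t ↔ AOut (liftS π') (liftM π') t) : π = π' := by
  have A := arcs_lift π
  have A' := arcs_lift π'
  have hM : ∀ r s, liftM π r s ↔ liftM π' r s := fun r s =>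
    ⟨A.M_of_out A' h, A'.M_of_out A (fun t => (h t).symm)⟩
  have hP : ∀ x y, Pairs π x y ↔ Pairs π' x y := by
    intro x y
    simp only [pairs_iff, hM]
  have hR : ∀ x y, Rel π.P x y ↔ Rel π'.P x y := by
    intro x y
    rcases eq_or_ne x y with rfl | hne
    · exact ⟨fun _ => Rel.refl _, fun _ => Rel.refl _⟩
    · exact ⟨fun h => ((hP x y).1 ⟨hne, h⟩).2, fun h => ((hP x y).2 ⟨hne, h⟩).2⟩
  have key : ∀ π π' : HalfPairing n, (∀ x y, Rel π.P x y ↔ Rel π'.P x y) →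
      π.P.parts ⊆ π'.P.parts := by
    intro π π' hR B hB
    obtain ⟨x, hx⟩ := π.P.nonempty_of_mem_parts hB
    obtain ⟨B', hB', hx'⟩ := π'.P.exists_mem (Finset.mem_univ x)
    have : B = B' := by
      ext y
      constructor
      · intro hy
        obtain ⟨C, hC, h1, h2⟩ := (hR x y).1 ⟨B, hB, hx, hy⟩
        rwa [π'.P.eq_of_mem_parts hB' hC hx' h1]
      · intro hy
        obtain ⟨C, hC, h1, h2⟩ := (hR x y).2 ⟨B', hB', hx', hy⟩
        rwa [π.P.eq_of_mem_parts hB hC hx h1]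
    rwa [this]
  have hparts : π.P = π'.P := by
    apply Finpartition.ext
    exact (key π π' hR).antisymm (key π' π (fun x y => (hR x y).symm))
  cases π; cases π'
  simp only at hparts
  subst hparts
  rfl

lemma inSet_injective : Function.Injective (inSet (n := n)) := by
  intro π π' h
  apply eq_of_out
  intro t
  rw [← outOriented_iff, ← outOriented_iff]
  have := congrArg (fun s => pr n t ∈ s) h
  simp only [inSet, Finset.mem_filter, Finset.mem_univ, true_and, eq_iff_iff] at this
  exact not_iff_not.1 this

end

/-- Every arc diagram is the lift of a half-pairing. -/
lemma exists_halfPairing {n : ℕ} [NeZero n] {S : ℤ → Prop} {M : ℤ → ℤ → Prop}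
    (A : Arcs n S M) : ∃ π : HalfPairing n, ∀ t, OutOriented π (pr n t) ↔ AOut S M t := by
  set Q : Fin n → Fin n → Prop := fun x y => ∃ r s, pr n r = x ∧ pr n s = y ∧ M r s with hQ
  have Qr : ∀ {r y}, Q (pr n r) y → ∃ s, pr n s = y ∧ M r s := by
    rintro r y ⟨r', s', h1, h2, h3⟩
    obtain ⟨q, rfl⟩ := pr_eq_shift h1
    refine ⟨s' - q * n, ?_, ?_⟩
    · rw [← h2, ← pr_add_mul (s' - q * n) q, sub_add_cancel]
    · rw [← A.perM_mul q, sub_add_cancel]; exact h3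
  have Ql : ∀ {x s}, Q x (pr n s) → ∃ r, pr n r = x ∧ M r s := by
    rintro x s ⟨r', s', h1, h2, h3⟩
    obtain ⟨q, rfl⟩ := pr_eq_shift h2
    refine ⟨r' - q * n, ?_, ?_⟩
    · rw [← h1, ← pr_add_mul (r' - q * n) q, sub_add_cancel]
    · rw [← A.perM_mul q, sub_add_cancel]; exact h3
  have Q1 : ∀ {x y z}, Q x y → Q x z → y = z := by
    rintro x y z ⟨r, s, rfl, rfl, h⟩ h'
    obtain ⟨s', rfl, h2⟩ := Qr h'
    rw [A.right_unique h h2]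
  have Q2 : ∀ {x y z}, Q x z → Q y z → x = y := by
    rintro x y z ⟨r, s, rfl, rfl, h⟩ h'
    obtain ⟨s', rfl, h2⟩ := Ql h'
    rw [A.left_unique h h2]
  have Q3 : ∀ {x y z}, Q x y → ¬ Q y z := by
    rintro x y z ⟨r, s, rfl, rfl, h⟩ h'
    obtain ⟨s', rfl, h2⟩ := Qr h'
    exact A.not_both h h2
  have Qne : ∀ {x y}, Q x y → x ≠ y := by
    rintro x y ⟨r, s, rfl, rfl, h⟩ he
    have := A.M_lt h
    have h1 := A.lt h
    exact h1.ne (pr_inj (a := r) (by omega) (by omega) (by omega) (by omega) he)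
  let st : Setoid (Fin n) :=
    { r := fun x y => x = y ∨ Q x y ∨ Q y x
      iseqv := by
        constructor
        · intro x; exact Or.inl rfl
        · rintro x y (h | h | h)
          · exact Or.inl h.symm
          · exact Or.inr (Or.inr h)
          · exact Or.inr (Or.inl h)
        · rintro x y z (rfl | h | h) (rfl | h' | h')
          · exact Or.inl rfl
          · exact Or.inr (Or.inl h')
          · exact Or.inr (Or.inr h')
          · exact Or.inr (Or.inl h)
          · exact absurd h' (Q3 h)
          · exact Or.inl (Q2 h h')
          · exact Or.inr (Or.inr h)
          · exact Or.inl (Q1 h h')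
          · exact absurd h (Q3 h') }
  let P : Finpartition (Finset.univ : Finset (Fin n)) := Finpartition.ofSetoid st
  have hRel : ∀ x y, Rel P x y ↔ x = y ∨ Q x y ∨ Q y x := by
    intro x y
    have h1 : y ∈ P.part x ↔ st x y := Finpartition.mem_part_ofSetoid_iff_rel
    change _ ↔ st x y
    rw [← h1]
    constructor
    · rintro ⟨B, hB, hx, hy⟩
      rwa [P.part_eq_of_mem hB hx]
    · intro hy
      exact ⟨P.part x, P.part_mem.2 (Finset.mem_univ x), P.mem_part (Finset.mem_univ x), hy⟩
  have hSing : ∀ t, IsSingleton P (pr n t) ↔ S t := by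
    intro t
    rw [isSingleton_iff]
    constructor
    · intro h
      rcases A.total t with h1 | ⟨s, h1⟩ | ⟨r, h1⟩
      · exact h1
      · have hq : Q (pr n t) (pr n s) := ⟨t, s, rfl, rfl, h1⟩
        exact absurd (h _ ((hRel _ _).2 (Or.inr (Or.inl hq)))) (Qne hq)
      · have hq : Q (pr n r) (pr n t) := ⟨r, t, rfl, rfl, h1⟩
        exact absurd (h _ ((hRel _ _).2 (Or.inr (Or.inr hq)))) (Qne hq).symm
    · intro h y hy
      rcases (hRel _ _).1 hy with h1 | h1 | h1
      · exact h1
      · obtain ⟨s, -, h2⟩ := Qr h1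
        exact absurd h (A.nS h2 le_rfl (A.lt h2).le)
      · obtain ⟨s, -, h2⟩ := Ql h1
        exact absurd h (A.nS h2 (A.lt h2).le le_rfl)
  -- a pair `x < y` of the circle lifts to an arc from `x` to `y` or from `y` to `x + n`
  have hlift : ∀ {x y : Fin n}, x < y → Rel P x y → M x.val y.val ∨ M y.val (x.val + n) := by
    intro x y hxy h
    have hxy' : x.val < y.val := hxy
    have hx := x.2
    have hy := y.2
    rcases (hRel _ _).1 h with h1 | h1 | h1
    · exact absurd h1 hxy.ne
    · rw [← pr_coe x] at h1
      obtain ⟨s, h2, h3⟩ := Qr h1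
      have := A.M_lt h3
      have h4 := A.lt h3
      rw [← pr_coe y] at h2
      have := pr_inj (a := x.val) (by omega) (by omega) (by omega) (by omega) h2
      left; rwa [← this]
    · rw [← pr_coe y] at h1
      obtain ⟨s, h2, h3⟩ := Qr h1
      have := A.M_lt h3
      have h4 := A.lt h3
      rw [← pr_coe x, ← pr_add (x.val : ℤ)] at h2
      have := pr_inj (a := y.val) (by omega) (by omega) (by omega) (by omega) h2
      right; rwa [← this]
  have hSv : ∀ x : Fin n, IsSingleton P x → S x.val := by
    intro x hx; rw [← hSing, pr_coe]; exact hx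
  have hnc : NonCrossingRel (Rel P) := by
    intro a b c d hab hbc hcd h1 h2
    exfalso
    have hab' : a.val < b.val := hab
    have hbc' : b.val < c.val := hbc
    have hcd' : c.val < d.val := hcd
    have hd := d.2
    rcases hlift (hab.trans hbc) h1 with h3 | h3 <;>
    rcases hlift (hbc.trans hcd) h2 with h4 | h4
    · have := A.nc h3 h4 (by omega) (by omega); omega
    · rw [← A.perM] at h3
      have := A.nc h4 h3 (by omega) (by omega); omega
    · have := A.nc h4 h3 (by omega) (by omega); omega
    · have := A.nc h3 h4 (by omega) (by omega); omega
  have hnct : NonCrossingRel (RelTilde P) := by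
    intro a b c d hab hbc hcd h1 h2
    have hab' : a.val < b.val := hab
    have hbc' : b.val < c.val := hbc
    have hcd' : c.val < d.val := hcd
    have hd := d.2
    rcases h1 with h1 | h1 <;> rcases h2 with h2 | h2
    · exact Or.inl (hnc a b c d hab hbc hcd h1 h2)
    · exfalso
      rcases hlift (hab.trans hbc) h1 with h3 | h3
      · exact A.nS h3 (x := b.val) (by omega) (by omega) (hSv b h2.1)
      · exact A.nS h3 (x := d.val) (by omega) (by omega) (hSv d h2.2)
    · exfalso
      rcases hlift (hbc.trans hcd) h2 with h3 | h3
      · exact A.nS h3 (x := c.val) (by omega) (by omega) (hSv c h1.2)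
      · exact A.nS h3 (x := a.val + n) (by omega) (by omega) ((A.perS _).2 (hSv a h1.1))
    · exact Or.inr ⟨h1.1, h2.1⟩
  let π : HalfPairing n :=
    { P := P
      card_le := by
        intro B hB
        by_contra hc
        obtain ⟨x, hx, y, hy, z, hz, hxy, hxz, hyz⟩ := Finset.two_lt_card.1 (not_le.1 hc)
        have h1 := (hRel x y).1 ⟨B, hB, hx, hy⟩
        have h2 := (hRel x z).1 ⟨B, hB, hx, hz⟩
        rcases h1 with h1 | h1 | h1
        · exact hxy h1
        · rcases h2 with h2 | h2 | h2
          · exact hxz h2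
          · exact hyz (Q1 h1 h2)
          · exact Q3 h2 h1
        · rcases h2 with h2 | h2 | h2
          · exact hxz h2
          · exact Q3 h1 h2
          · exact hyz (Q2 h1 h2)
      exists_singleton := by
        obtain ⟨t, ht⟩ := A.exS
        exact ⟨pr n t, (hSing t).2 ht⟩
      nc := hnc
      nc_tilde := hnct }
  have hM : ∀ {r s}, M r s → liftM π r s := by
    intro r s h
    refine ⟨A.lt h, A.M_lt h, ⟨Qne ⟨r, s, rfl, rfl, h⟩, ?_⟩, ?_⟩
    · exact (hRel _ _).2 (Or.inr (Or.inl ⟨r, s, rfl, rfl, h⟩))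
    · intro x hx hx' hs
      exact A.nS h hx hx' ((hSing x).1 hs)
  refine ⟨π, fun t => ?_⟩
  rw [outOriented_iff]
  constructor
  · intro h
    by_contra hc
    obtain ⟨r, hr⟩ := A.not_out_iff.1 hc
    exact (arcs_lift π).not_out_iff.2 ⟨r, hM hr⟩ h
  · rintro (h | ⟨s, h⟩)
    · exact Or.inl ((hSing t).2 h)
    · exact Or.inr ⟨s, hM h⟩

/-- Every set of less than half of the points of the circle is the set of inward points of a
half-pairing. -/
lemma exists_inSet {n : ℕ} [NeZero n] (I : Finset (Fin n)) (hI : 2 * I.card < n) :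
    ∃ π : HalfPairing n, inSet π = I := by
  have hper : ∀ t, (fun t => pr n t ∉ I) (t + n) ↔ (fun t => pr n t ∉ I) t := by
    intro t; simp only [pr_add]
  have hk : 0 < ht (fun t => pr n t ∉ I) n := by
    rw [ht_pr (fun x => x ∉ I)]
    simp only [not_not]
    rw [Finset.filter_mem_eq_inter, Finset.univ_inter]
    omega
  obtain ⟨π, hπ⟩ := exists_halfPairing (arcs_of_height n_pos hper hk)
  refine ⟨π, ?_⟩
  ext x
  rw [← pr_coe x]
  simp only [inSet, Finset.mem_filter, Finset.mem_univ, true_and]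
  rw [hπ, hOut_iff n_pos hper hk]
  simp

/-- The number of half-pairings of `[n]` with `n - 2 * m > 0` through strings. -/
lemma card_halfPairing {n : ℕ} [NeZero n] (m k : ℕ) (hk : 1 ≤ k) (hn : k + 2 * m = n) :
    Nat.card {π : HalfPairing n // (throughFinset π).card = k} = n.choose m := by
  have e : {π : HalfPairing n // (throughFinset π).card = k} ≃
      {I : Finset (Fin n) // I ∈ Finset.powersetCard m Finset.univ} := by
    refine Equiv.ofBijective (fun π => ⟨inSet π.1, ?_⟩) ⟨?_, ?_⟩
    · have := card_total π.1
      have h2 := π.2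
      rw [Finset.mem_powersetCard]
      exact ⟨Finset.subset_univ _, by omega⟩
    · intro π π' h
      exact Subtype.ext (inSet_injective (congrArg Subtype.val h))
    · rintro ⟨I, hI⟩
      have hc := (Finset.mem_powersetCard.1 hI).2
      obtain ⟨π, hπ⟩ := exists_inSet I (by omega)
      have := card_total π
      rw [hπ] at this
      exact ⟨⟨π, by omega⟩, Subtype.ext hπ⟩
  rw [Nat.card_congr e, Nat.card_eq_fintype_card, Fintype.card_coe, Finset.card_powersetCard,
    Finset.card_univ, Fintype.card_fin]

/-! ### Cyclic reduction along a half-pairing -/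

section
variable {n : ℕ}

lemma sorted_adjacent {L : List (Fin n)} (hL : L.Pairwise (· < ·)) {x y : Fin n} (hx : x ∈ L)
    (hy : y ∈ L) (hxy : x < y) (h : ∀ z ∈ L, x < z → ¬ z < y) :
    ∃ L1 L2, L = L1 ++ x :: y :: L2 := by
  obtain ⟨L1, L2, rfl⟩ := List.append_of_mem hx
  rw [List.pairwise_append] at hL
  have hy2 : y ∈ L2 := by
    rcases List.mem_append.1 hy with h1 | h1
    · exact absurd (hL.2.2 y h1 x (by simp)) (not_lt.2 hxy.le)
    · rcases List.mem_cons.1 h1 with h2 | h2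
      · exact absurd h2 hxy.ne'
      · exact h2
  obtain ⟨L3, L4, rfl⟩ := List.append_of_mem hy2
  rcases L3 with _ | ⟨z, L3⟩
  · exact ⟨L1, L4, rfl⟩
  · exfalso
    have h1 := hL.2.1
    rw [List.pairwise_cons] at h1
    have h2 := h1.2
    rw [List.pairwise_append] at h2
    exact h z (by simp) (h1.1 z (by simp)) (h2.2.2 z (by simp) y (by simp))

lemma sorted_first {L : List (Fin n)} (hL : L.Pairwise (· < ·)) {y : Fin n} (hy : y ∈ L)
    (h : ∀ z ∈ L, ¬ z < y) : ∃ L2, L = y :: L2 := by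
  obtain ⟨L1, L2, rfl⟩ := List.append_of_mem hy
  rcases L1 with _ | ⟨z, L1⟩
  · exact ⟨L2, rfl⟩
  · rw [List.pairwise_append] at hL
    exact absurd (hL.2.2 z (by simp) y (by simp)) (h z (by simp))

lemma sorted_last {L : List (Fin n)} (hL : L.Pairwise (· < ·)) {x : Fin n} (hx : x ∈ L)
    (h : ∀ z ∈ L, ¬ x < z) : ∃ L1, L = L1 ++ [x] := by
  obtain ⟨L1, L2, rfl⟩ := List.append_of_mem hx
  rcases L2 with _ | ⟨z, L2⟩
  · exact ⟨L1, rfl⟩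
  · rw [List.pairwise_append, List.pairwise_cons] at hL
    exact absurd (hL.2.1.1 z (by simp)) (h z (by simp))

variable {N : ℕ} (π : HalfPairing n) (w : Fin n → Letter N)

lemma mem_through {x : Fin n} : x ∈ (throughFinset π).sort (· ≤ ·) ↔ IsSingleton π.P x := by
  simp [throughFinset]

variable [NeZero n]

lemma exists_shift (a b : ℤ) : ∃ q : ℤ, 0 ≤ a + q * n ∧ a + q * n < n ∧
    pr n (a + q * n) = pr n a ∧ pr n (b + q * n) = pr n b := by
  refine ⟨-(a / n), ?_, ?_, pr_add_mul _ _, pr_add_mul _ _⟩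
  · have := Int.emod_add_mul_ediv a n
    have h := Int.emod_nonneg a (n_pos (n := n)).ne'
    have : a + -(a / n) * n = a % n := by linarith
    omega
  · have := Int.emod_add_mul_ediv a n
    have h := Int.emod_lt_of_pos a (n_pos (n := n))
    have : a + -(a / n) * n = a % n := by linarith
    omega

/-- If the letters of each pair of `π` are inverse to each other, then a set of positions which
contains all through strings and is a union of blocks reads a word that reduces cyclically to the
through word.  A pair spanning a shortest arc is removed first: its two ends are cyclically
adjacent. -/
lemma cycReduces_of_list (hw : ∀ r s, Pairs π r s → w r = linv (w s)) (m : ℕ) :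
    ∀ L : List (Fin n), L.length = m → L.Pairwise (· < ·) →
      (∀ x, IsSingleton π.P x → x ∈ L) → (∀ x y, Pairs π x y → x ∈ L → y ∈ L) →
      CycReducesTo (L.map w) (throughWord w π) := by
  have A := arcs_lift π
  induction m using Nat.strong_induction_on with
  | _ m ih =>
    intro L hlen hL hS hP
    by_cases hall : ∀ x ∈ L, IsSingleton π.P x
    · have : L = (throughFinset π).sort (· ≤ ·) := by
        apply List.Perm.eq_of_pairwise (le := fun a b => a < b)
        · intro a b _ _ h1 h2
          exact absurd h1 (not_lt.2 h2.le)
        · exact hL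
        · exact Finset.sortedLT_sort _ |>.pairwise
        · rw [List.perm_ext_iff_of_nodup (hL.imp (fun h => ne_of_lt h)) (Finset.sort_nodup _ _)]
          intro x
          rw [mem_through]
          exact ⟨hall x, hS x⟩
      rw [this]
      exact Relation.ReflTransGen.refl
    · push Not at hall
      obtain ⟨x0, hx0, hx0'⟩ := hall
      have hex : ∃ d : ℕ, ∃ r s, liftM π r s ∧ pr n r ∈ L ∧ pr n s ∈ L ∧ s - r = d := by
        obtain ⟨y0, hy0⟩ := exists_pair hx0'
        obtain ⟨r, s, h1, h2⟩ := (pairs_iff π).1 hy0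
        have h3 := A.lt h2
        have hy0' := hP _ _ hy0 hx0
        refine ⟨(s - r).toNat, r, s, h2, ?_, ?_, by omega⟩
        · rcases h1 with ⟨rfl, rfl⟩ | ⟨rfl, rfl⟩ <;> assumption
        · rcases h1 with ⟨rfl, rfl⟩ | ⟨rfl, rfl⟩ <;> assumption
      obtain ⟨r', s', hM', hr', hs', hd'⟩ := Nat.find_spec hex
      have hmin : ∀ {r s}, liftM π r s → pr n r ∈ L → pr n s ∈ L →
          ((Nat.find hex : ℕ) : ℤ) ≤ s - r := by
        intro r s h1 h2 h3
        have h4 := A.lt h1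
        have := Nat.find_min' hex (m := (s - r).toNat) ⟨r, s, h1, h2, h3, by omega⟩
        omega
      obtain ⟨q, hq0, hqn, e1, e2⟩ := exists_shift (n := n) r' s'
      rw [← A.perM_mul q] at hM'
      rw [← e1] at hr'
      rw [← e2] at hs'
      have hd : (s' + q * n) - (r' + q * n) = (Nat.find hex : ℕ) := by omega
      obtain ⟨r, s, hM, hr, hs, hq0, hqn, hd⟩ : ∃ r s : ℤ, liftM π r s ∧ pr n r ∈ L ∧
          pr n s ∈ L ∧ 0 ≤ r ∧ r < n ∧ s - r = (Nat.find hex : ℕ) :=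
        ⟨_, _, hM', hr', hs', hq0, hqn, hd⟩
      have hbet : ∀ t, r < t → t < s → pr n t ∉ L := by
        intro t h1 h2 ht
        obtain ⟨u, h3, h4, h5 | h5⟩ := A.interior hM t (by omega) h2
        · have := hmin h5 ht (hP _ _ h5.2.2.1 ht); omega
        · have := hmin h5 (hP _ _ h5.2.2.1.symm ht) ht; omega
      have hlt := A.lt hM
      have hlt' := A.M_lt hM
      have hxv := pr_val_of_lt hq0 hqn
      have hpair : Pairs π (pr n r) (pr n s) := hM.2.2.1
      revert hpair hr hs
      obtain ⟨x, hx⟩ : ∃ x, x = pr n r := ⟨_, rfl⟩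
      obtain ⟨y, hy⟩ : ∃ y, y = pr n s := ⟨_, rfl⟩
      rw [← hx, ← hy]
      rw [← hx] at hxv
      intro hr hs hpair
      have step : ∀ L' : List (Fin n), L'.Sublist L → L'.length < L.length →
          (∀ z, z ∈ L' ↔ z ∈ L ∧ z ≠ x ∧ z ≠ y) → CyclicStep (L.map w) (L'.map w) →
          CycReducesTo (L.map w) (throughWord w π) := by
        intro L' hsub hlen' hmem hstep
        refine Relation.ReflTransGen.head hstep
          (ih L'.length (by omega) L' rfl (hL.sublist hsub) ?_ ?_)
        · intro z hz
          refine (hmem z).2 ⟨hS z hz, ?_, ?_⟩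
          · rintro rfl; exact hpair.not_single hz
          · rintro rfl; exact hpair.symm.not_single hz
        · intro a b hab ha
          obtain ⟨h1, h2, h3⟩ := (hmem a).1 ha
          refine (hmem b).2 ⟨hP a b hab h1, ?_, ?_⟩
          · rintro rfl; exact h3 (hab.symm.unique hpair)
          · rintro rfl; exact h2 (hab.symm.unique hpair.symm)
      have hval : ∀ z : Fin n, pr n ((z.val : ℤ) + n) = z := fun z => by rw [pr_add, pr_coe]
      by_cases hsn : s < n
      · have hyv := pr_val_of_lt (n := n) (show 0 ≤ s by omega) hsn
        rw [← hy] at hyv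
        obtain ⟨L1, L2, rfl⟩ := sorted_adjacent hL hr hs (show x.val < y.val by omega) (by
          intro z hz h1 h2
          have h1' : x.val < z.val := h1
          have h2' : z.val < y.val := h2
          exact hbet z.val (by omega) (by omega) (by rwa [pr_coe]))
        refine step (L1 ++ L2) ?_ ?_ ?_ ?_
        · exact List.Sublist.append (List.Sublist.refl _)
            ((List.sublist_cons_self _ _).trans (List.sublist_cons_self _ _))
        · simp
        · intro z
          simp only [List.pairwise_append, List.pairwise_cons] at hL
          obtain ⟨-, ⟨h2, h3, -⟩, h5⟩ := hL
          constructor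
          · intro hz
            refine ⟨by simp at hz ⊢; tauto, ?_, ?_⟩
            · rintro rfl
              rcases List.mem_append.1 hz with h | h
              · exact lt_irrefl _ (h5 z h z (by simp))
              · exact lt_irrefl _ (h2 z (by simp [h]))
            · rintro rfl
              rcases List.mem_append.1 hz with h | h
              · exact lt_irrefl _ (h5 z h z (by simp))
              · exact lt_irrefl _ (h3 z h)
          · rintro ⟨h, h', h''⟩
            simp at h ⊢; tauto
        · left
          have h1 := hw y x hpair.symm
          simp only [List.map_append, List.map_cons, h1]
          exact FreeGroup.Red.Step.not
      · have hyv := pr_val_of_lt (n := n) (show 0 ≤ s - n by omega) (by omega)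
        rw [pr_sub, ← hy] at hyv
        obtain ⟨L2, rfl⟩ := sorted_first hL hs (by
          intro z hz h1
          have h1' : z.val < y.val := h1
          exact hbet (z.val + n) (by omega) (by omega) (by rwa [hval]))
        have hxL2 : x ∈ L2 := by
          rcases List.mem_cons.1 hr with h | h
          · exact absurd h hpair.1
          · exact h
        rw [List.pairwise_cons] at hL
        obtain ⟨L3, rfl⟩ := sorted_last hL.2 hxL2 (by
          intro z hz h1
          have h1' : x.val < z.val := h1
          exact hbet z.val (by omega) (by have := z.2; omega)
            (by rw [pr_coe]; exact List.mem_cons_of_mem _ hz))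
        have hL' : (y :: (L3 ++ [x])).Pairwise (· < ·) := List.pairwise_cons.2 hL
        rw [List.pairwise_append] at hL
        refine step L3 ?_ ?_ ?_ ?_
        · exact (List.sublist_append_left _ _).trans (List.sublist_cons_self _ _)
        · simp
        · intro z
          constructor
          · intro hz
            refine ⟨by simp [hz], ?_, ?_⟩
            · rintro rfl; exact lt_irrefl _ (hL.2.2.2 z hz z (by simp))
            · rintro rfl; exact lt_irrefl _ (hL.1 z (by simp [hz]))
          · rintro ⟨h, h', h''⟩
            simp at h; tauto
        · right
          refine ⟨w y, L3.map w, ?_, rfl⟩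
          simp [hw x y hpair]

lemma cycReduces (hw : ∀ r s, Pairs π r s → w r = linv (w s)) :
    CycReducesTo (List.ofFn w) (throughWord w π) := by
  have := cycReduces_of_list π w hw n (List.finRange n) (by simp)
    (List.pairwise_lt_finRange n) (by simp) (by simp)
  rwa [← List.ofFn_eq_map] at this

/-- The cover condition between two through strings follows from cyclic reducedness of the
through word, since the two are then cyclically consecutive through strings. -/
lemma cover_through (hc : CycReduced (throughWord w π)) {i j : ℤ} (hij : i < j)
    (hi : liftS π i) (hj : liftS π j) (hcl : AClosed (liftM π) (i + 1) j) :
    w (pr n i) ≠ linv (w (pr n j)) := by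
  have A := arcs_lift π
  have hlt := A.closed_lt hcl
  have hbet : ∀ t, i < t → t < j → ¬ IsSingleton π.P (pr n t) := fun t h1 h2 =>
    A.closed_not_S hcl (by omega) h2
  obtain ⟨q, hq0, hqn, e1, e2⟩ := exists_shift (n := n) i j
  have hbet' : ∀ t, i + q * n < t → t < j + q * n → ¬ IsSingleton π.P (pr n t) := by
    intro t h1 h2 h3
    apply hbet (t + (-q) * n) (by linarith) (by linarith)
    rwa [pr_add_mul]
  have hlt' : j + q * n ≤ i + q * n + n := by omega
  have hij' : i + q * n < j + q * n := by omega
  have hi' : IsSingleton π.P (pr n (i + q * n)) := by rw [e1]; exact hi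
  have hj' : IsSingleton π.P (pr n (j + q * n)) := by rw [e2]; exact hj
  rw [← e1, ← e2]
  clear hbet e1 e2 hlt hi hj hcl hij
  revert hq0 hqn hbet' hi' hj' hlt' hij'
  generalize i + q * n = i
  generalize j + q * n = j
  intro hi0 hin hbet hij' hij hi hj
  have hxv := pr_val_of_lt hi0 hin
  have hL : ((throughFinset π).sort (· ≤ ·)).Pairwise (· < ·) :=
    (Finset.sortedLT_sort _).pairwise
  have hi2 := (mem_through π).2 hi
  have hj2 := (mem_through π).2 hj
  have hmem := fun z => (mem_through (x := z) π).1
  have key : ∀ a b : Letter N, [a, b] <:+: throughWord w π ++ throughWord w π → a ≠ linv b := by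
    intro a b hab h
    have h1 : [a, b].IsChain (fun a b => b ≠ linv a) := List.IsChain.infix hc hab
    simp only [List.isChain_cons_cons, List.isChain_singleton, and_true] at h1
    exact h1 (by rw [h, linv_linv])
  apply key
  by_cases hjn : j < n
  · have hyv := pr_val_of_lt (n := n) (show 0 ≤ j by omega) hjn
    obtain ⟨L1, L2, h⟩ := sorted_adjacent hL hi2 hj2
      (show (pr n i).val < (pr n j).val by omega) (by
        intro z hz h1 h2
        have h1' : (pr n i).val < z.val := h1
        have h2' : z.val < (pr n j).val := h2
        exact hbet z.val (by omega) (by omega) (by rw [pr_coe]; exact hmem z hz))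
    refine ⟨L1.map w, L2.map w ++ throughWord w π, ?_⟩
    conv_rhs => enter [1]; unfold throughWord; rw [h]
    simp
  · have hyv := pr_val_of_lt (n := n) (show 0 ≤ j - n by omega) (by omega)
    rw [pr_sub] at hyv
    obtain ⟨L2, h2⟩ := sorted_first hL hj2 (by
      intro z hz h1
      have h1' : z.val < (pr n j).val := h1
      exact hbet (z.val + n) (by omega) (by omega) (by rw [pr_add, pr_coe]; exact hmem z hz))
    obtain ⟨L1, h1⟩ := sorted_last hL hi2 (by
      intro z hz h1
      have h1' : (pr n i).val < z.val := h1
      exact hbet z.val (by omega) (by have := z.2; omega) (by rw [pr_coe]; exact hmem z hz))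
    refine ⟨L1.map w, L2.map w, ?_⟩
    conv_rhs =>
      congr
      · unfold throughWord; rw [h1]
      · unfold throughWord; rw [h2]
    simp

/-- Admissibility, with the redundant conditions removed. -/
lemma admissible_iff {v : List (Letter N)} (hv : CycReduced v) :
    Admissible w π ∧ throughWord w π = v ↔
      (∀ r s, Pairs π r s → w r = linv (w s)) ∧ throughWord w π = v ∧
        ∀ i j, Covers π i j → ¬ IsSingleton π.P j → w i ≠ linv (w j) := by
  have A := arcs_lift π
  constructor
  · rintro ⟨⟨⟨h1, h2, h3⟩, h4⟩, h5⟩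
    exact ⟨h1, h5, fun i j hij _ => h4 i j hij⟩
  · rintro ⟨h1, rfl, h3⟩
    refine ⟨⟨⟨h1, cycReduces π w h1, hv⟩, ?_⟩, rfl⟩
    intro x y hxy
    by_cases hy : IsSingleton π.P y
    · obtain ⟨j, -, -, rfl⟩ := exists_lift 0 y
      obtain ⟨h4, i, hij, rfl, hi, hcl⟩ := (covers_iff π x j).1 hxy
      exact cover_through π w hv hij (A.pred_of_S hi hij hcl hy) hy hcl
    · exact h3 x y hxy hy

lemma Admissible.compat {π : HalfPairing n} {w : Fin n → Letter N} (h : Admissible w π) :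
    Compat (liftS π) (liftM π) (fun t => w (pr n t)) where
  pair := fun hM => h.1.1 _ _ hM.2.2.1.symm
  cover := fun {i j} hij hi hj hcl => h.2 _ _ ((covers_iff π _ j).2 ⟨hj, i, hij, rfl, hi, hcl⟩)

/-- A word has at most one admissible half-pairing. -/
lemma admissible_unique {π π' : HalfPairing n} {w : Fin n → Letter N} (h : Admissible w π)
    (h' : Admissible w π') : π = π' :=
  eq_of_out (out_unique (arcs_lift π) (arcs_lift π') h.compat h'.compat (drift_pos π'))

end

/-! ### Counting the words with a given admissible half-pairing -/

/-- If the points of `X` form a forest, with parent function `p` lowering `rank`, and the letter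
at each point `x` may be chosen in `c x` ways once the letter at its parent is known, then there
are `∏ x, c x` labelings. -/
lemma card_forest {X L : Type} [Fintype X] (rank : X → ℕ) (p : X → Option X)
    (hr : ∀ x y, p x = some y → rank y < rank x) (C : X → Option L → Finset L) (c : X → ℕ)
    (hc : ∀ x a, (C x a).card = c x) :
    Nat.card {w : X → L // ∀ x, w x ∈ C x ((p x).map w)} = ∏ x, c x := by
  let e : ∀ x a, C x a ≃ Fin (c x) := fun x a => Finset.equivFinOfCardEq (hc x a)
  have hbij : Function.Bijective
      (fun (w : {w : X → L // ∀ x, w x ∈ C x ((p x).map w)}) (x : X) =>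
        e x ((p x).map w.1) ⟨w.1 x, w.2 x⟩) := by
    constructor
    · rintro ⟨w, hw⟩ ⟨w', hw'⟩ h
      apply Subtype.ext
      change w = w'
      have key : ∀ m x, rank x = m → w x = w' x := by
        intro m
        induction m using Nat.strong_induction_on with
        | _ m ih =>
          intro x hx
          have h1 := congrFun h x
          have h2 : (p x).map w = (p x).map w' := by
            rcases hp : p x with _ | y
            · rfl
            · have := hr x y hp
              simp only [Option.map_some]
              rw [ih (rank y) (by omega) y rfl]
          simp only at h1
          have gen : ∀ (a b : Option L) (hab : a = b) (ha : w x ∈ C x a) (hb : w' x ∈ C x b),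
              e x a ⟨w x, ha⟩ = e x b ⟨w' x, hb⟩ → w x = w' x := by
            rintro a b rfl ha hb h3
            exact congrArg Subtype.val ((e x a).injective h3)
          exact gen _ _ h2 _ _ h1
      exact funext fun x => key _ x rfl
    · intro g
      let F : ∀ x, (∀ y, rank y < rank x → L) → L := fun x ih =>
        ((e x (match h : p x with
          | none => none
          | some y => some (ih y (hr x y h)))).symm (g x) : L)
      let w : X → L := (measure rank).wf.fix F
      have hw : ∀ x, w x = ((e x ((p x).map w)).symm (g x) : L) := by
        intro x
        have h1 : w x = F x (fun y _ => w y) := WellFounded.fix_eq _ _ _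
        rw [h1]
        have h2 : (match h : p x with
          | none => none
          | some y => some (w y) : Option L) = (p x).map w := by
          cases p x <;> rfl
        simp only [F]
        rw [h2]
      refine ⟨⟨w, fun x => ?_⟩, ?_⟩
      · rw [hw x]; exact Subtype.prop _
      · funext x
        simp only
        rw [← Equiv.eq_symm_apply]
        exact Subtype.ext (hw x)
  rw [Nat.card_congr (Equiv.ofBijective _ hbij), Nat.card_pi]
  simp

section
variable {n N : ℕ} (π : HalfPairing n)

lemma throughWord_length (w : Fin n → Letter N) :
    (throughWord w π).length = (throughFinset π).card := by
  simp [throughWord]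

lemma throughWord_eq_iff (w : Fin n → Letter N) (v : List (Letter N)) (d : Letter N)
    (hv : v.length = (throughFinset π).card) :
    throughWord w π = v ↔ ∀ x, IsSingleton π.P x →
      w x = v.getD (((throughFinset π).sort (· ≤ ·)).idxOf x) d := by
  constructor
  · rintro rfl x hx
    have hmem := (mem_through π).2 hx
    have hlt := List.idxOf_lt_length_iff.2 hmem
    rw [List.getD_eq_getElem _ _ (by simpa [throughWord] using hlt)]
    simp [throughWord]
  · intro h
    refine List.ext_getElem (by rw [throughWord_length, hv]) fun i h1 h2 => ?_
    have h3 : i < ((throughFinset π).sort (· ≤ ·)).length := by simpa [throughWord] using h1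
    have hx := (mem_through π).1 (List.getElem_mem h3)
    have h4 := h _ hx
    rw [List.Nodup.idxOf_getElem (Finset.sort_nodup _ _), List.getD_eq_getElem _ _ h2] at h4
    simpa [throughWord] using h4

variable [NeZero n]

/-- Fix a through string and cut the circle there.  Every other outward point is covered by an
earlier point, and every inward point is paired with an earlier point. -/
lemma exists_parent : ∃ (rank : Fin n → ℕ) (p : Fin n → Option (Fin n)),
    (∀ x y, p x = some y → rank y < rank x) ∧
    (∀ x, x ∈ opSet π → ∃ y, p x = some y ∧ Covers π y x) ∧
    (∀ x, x ∈ inSet π → ∃ y, p x = some y ∧ Pairs π x y) := by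
  have A := arcs_lift π
  obtain ⟨t0, h0⟩ := A.exS
  choose τ hτ0 hτn hτ using exists_lift (n := n) t0
  have hτpr : ∀ t, t0 ≤ t → t < t0 + n → τ (pr n t) = t := fun t h1 h2 =>
    pr_inj (hτ0 _) (hτn _) h1 h2 (hτ _)
  let rank : Fin n → ℕ := fun x => (τ x - t0).toNat
  have key : ∀ x, ∃ p : Option (Fin n), (∀ y, p = some y → rank y < rank x) ∧
      (x ∈ opSet π → ∃ y, p = some y ∧ Covers π y x) ∧
      (x ∈ inSet π → ∃ y, p = some y ∧ Pairs π x y) := by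
    intro x
    have hx := hτ x
    have hx0 := hτ0 x
    have hxn := hτn x
    by_cases hs : IsSingleton π.P x
    · refine ⟨none, by simp, fun h => ?_, fun h => ?_⟩
      · simp [opSet, hs] at h
      · simp [inSet, out_of_single π hs] at h
    have hne : t0 < τ x := by
      refine lt_of_le_of_ne hx0 fun h => hs ?_
      rw [← hx, ← h]; exact h0
    by_cases ho : OutOriented π x
    · obtain ⟨i, hi0, hit, hi, hcl⟩ := A.exists_pred h0 (τ x) hne
      refine ⟨some (pr n i), ?_, fun _ => ⟨_, rfl, ?_⟩, fun h => ?_⟩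
      · intro y hy
        obtain rfl := Option.some_injective _ hy
        have := hτpr i hi0 (by omega)
        simp only [rank]; omega
      · rw [← hx, outOriented_iff] at ho
        have := (covers_iff π (pr n i) (τ x)).2 ⟨ho, i, hit, rfl, hi, hcl⟩
        rwa [hx] at this
      · simp [inSet, ho] at h
    · have ho' := ho
      rw [← hx, outOriented_iff, A.not_out_iff] at ho'
      obtain ⟨r, hr⟩ := ho'
      have hlt := A.lt hr
      have hr0 : t0 < r := by
        by_contra hc
        exact A.nS hr (not_lt.1 hc) hne.le h0
      refine ⟨some (pr n r), ?_, fun h => ?_, fun _ => ⟨_, rfl, ?_⟩⟩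
      · intro y hy
        obtain rfl := Option.some_injective _ hy
        have := hτpr r hr0.le (by omega)
        simp only [rank]; omega
      · simp [opSet, ho] at h
      · have := hr.2.2.1.symm
        rwa [hx] at this
  choose p hp using key
  exact ⟨rank, p, fun x => (hp x).1, fun x => (hp x).2.1, fun x => (hp x).2.2⟩

lemma covers_unique {x y j : Fin n} (h : Covers π x j) (h' : Covers π y j) : x = y := by
  obtain ⟨t, -, -, rfl⟩ := exists_lift 0 j
  obtain ⟨-, i, hi, rfl, h1, h2⟩ := (covers_iff π x t).1 h
  obtain ⟨-, i', hi', rfl, h1', h2'⟩ := (covers_iff π y t).1 h'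
  rw [(arcs_lift π).pred_unique h1 h1' hi hi' h2 h2']

/-- Each half-pairing with `k` through strings and `m` pairs is admissible, with through word `v`,
for `(2N - 1) ^ m` words: only the outward ends of the pairs can be chosen, each avoiding one
letter. -/
lemma card_words (v : List (Letter N)) (hvc : CycReduced v) (hv0 : v ≠ [])
    (hv : v.length = (throughFinset π).card) :
    Nat.card {w : Fin n → Letter N // Admissible w π ∧ throughWord w π = v} =
      (2 * N - 1) ^ (inSet π).card := by
  obtain ⟨rank, p, hr, hop, hin⟩ := exists_parent π
  obtain ⟨d, -⟩ := List.exists_mem_of_ne_nil v hv0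
  let C : Fin n → Option (Letter N) → Finset (Letter N) := fun x a =>
    if x ∈ opSet π then Finset.univ.erase (linv (a.getD d))
    else if x ∈ inSet π then {linv (a.getD d)}
    else {v.getD (((throughFinset π).sort (· ≤ ·)).idxOf x) d}
  let c : Fin n → ℕ := fun x => if x ∈ opSet π then 2 * N - 1 else 1
  have hc : ∀ x a, (C x a).card = c x := by
    intro x a
    simp only [C, c]
    split_ifs
    · rw [Finset.card_erase_of_mem (Finset.mem_univ _)]
      simp [mul_comm]
    · simp
    · simp
  have hcases : ∀ x, x ∉ opSet π → x ∉ inSet π → IsSingleton π.P x := by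
    intro x h1 h2
    simp only [opSet, inSet, Finset.mem_filter, Finset.mem_univ, true_and] at h1 h2
    tauto
  have hs1 : ∀ x, IsSingleton π.P x → x ∉ opSet π := by
    intro x hx; simp [opSet, hx]
  have hs2 : ∀ x, IsSingleton π.P x → x ∉ inSet π := by
    intro x hx; simp [inSet, out_of_single π hx]
  have hoi : ∀ x, x ∈ inSet π → x ∉ opSet π := by
    intro x hx hx'
    simp only [opSet, inSet, Finset.mem_filter, Finset.mem_univ, true_and] at hx hx'
    exact hx hx'.1
  have hiff : ∀ w : Fin n → Letter N, (Admissible w π ∧ throughWord w π = v) ↔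
      ∀ x, w x ∈ C x ((p x).map w) := by
    intro w
    rw [admissible_iff π w hvc, throughWord_eq_iff π w v d hv]
    constructor
    · rintro ⟨h1, h2, h3⟩ x
      by_cases ho : x ∈ opSet π
      · obtain ⟨y, hy, hcov⟩ := hop x ho
        simp only [C, if_pos ho, hy, Option.map_some, Option.getD_some, Finset.mem_erase,
          Finset.mem_univ, and_true]
        intro h
        have hns : ¬ IsSingleton π.P x := fun h => hs1 x h ho
        exact h3 y x hcov hns (by rw [h, linv_linv])
      by_cases hi : x ∈ inSet π
      · obtain ⟨y, hy, hpair⟩ := hin x hi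
        simp only [C, if_neg ho, if_pos hi, hy, Option.map_some, Option.getD_some,
          Finset.mem_singleton]
        exact h1 x y hpair
      · simp only [C, if_neg ho, if_neg hi, Finset.mem_singleton]
        exact h2 x (hcases x ho hi)
    · intro h
      have hpin : ∀ r s, Pairs π r s → s ∈ inSet π → w s = linv (w r) := by
        intro r s hrs hs
        obtain ⟨y, hy, hpair⟩ := hin s hs
        have h1 := h s
        simp only [C, if_neg (hoi s hs), if_pos hs, hy, Option.map_some, Option.getD_some,
          Finset.mem_singleton] at h1
        rw [h1, hpair.unique hrs.symm]
      refine ⟨?_, ?_, ?_⟩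
      · intro r s hrs
        by_cases hs : s ∈ inSet π
        · rw [hpin r s hrs hs, linv_linv]
        · refine hpin s r hrs.symm ?_
          simp only [inSet, Finset.mem_filter, Finset.mem_univ, true_and, not_not] at hs ⊢
          exact (pair_out π hrs.symm).1 hs
      · intro x hx
        have h1 := h x
        simpa only [C, if_neg (hs1 x hx), if_neg (hs2 x hx), Finset.mem_singleton] using h1
      · intro i j hij hj heq
        have hjo : j ∈ opSet π := by
          simp only [opSet, Finset.mem_filter, Finset.mem_univ, true_and]
          exact ⟨hij.2.1, hj⟩
        obtain ⟨y, hy, hcov⟩ := hop j hjo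
        obtain rfl := covers_unique π hij hcov
        have h1 := h j
        simp only [C, if_pos hjo, hy, Option.map_some, Option.getD_some, Finset.mem_erase,
          Finset.mem_univ, and_true] at h1
        exact h1 (by rw [heq, linv_linv])
  rw [Nat.card_congr (Equiv.subtypeEquivRight hiff), card_forest rank p hr C c hc]
  simp only [c]
  rw [Finset.prod_ite_mem, Finset.univ_inter, Finset.prod_const, card_opSet]

instance finite_halfPairing : Finite (HalfPairing n) :=
  Finite.of_injective _ (inSet_injective (n := n))

end

/-- The number of words of length `n` whose standard cyclic reduction is a
given cyclically reduced word `v` of length `k ≥ 1` is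
`(2N-1)^((n-k)/2) * C(n, (n-k)/2)` when `n - k` is even and nonnegative, and
`0` otherwise.  In particular it does not depend on `v`. -/
theorem count_words_with_standard_cyclic_reduction (N n k : ℕ) (hk : 1 ≤ k)
    (v : List (Letter N)) (hvc : CycReduced v) (hvk : v.length = k) :
    Nat.card {w : Fin n → Letter N // StandardCycRed w v} =
      (if k ≤ n ∧ Even (n - k) then
        (2 * N - 1) ^ ((n - k) / 2) * n.choose ((n - k) / 2)
      else 0) := by
  split_ifs with h
  · obtain ⟨hkn, m, hm⟩ := h
    have : NeZero n := ⟨by omega⟩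
    have hm2 : (n - k) / 2 = m := by omega
    have hv0 : v ≠ [] := by rintro rfl; simp at hvk; omega
    rw [hm2]
    -- the words are sorted according to their unique admissible half-pairing
    let f : (Σ π : {π : HalfPairing n // (throughFinset π).card = k},
        {w : Fin n → Letter N // Admissible w π.1 ∧ throughWord w π.1 = v}) →
        {w : Fin n → Letter N // StandardCycRed w v} := fun q => ⟨q.2.1, q.1.1, q.2.2⟩
    have hf : Function.Bijective f := by
      constructor
      · rintro ⟨⟨π, hπ⟩, ⟨w, hw⟩⟩ ⟨⟨π', hπ'⟩, ⟨w', hw'⟩⟩ he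
        have h1 : w = w' := congrArg Subtype.val he
        subst h1
        obtain rfl := admissible_unique hw.1 hw'.1
        rfl
      · rintro ⟨w, π, h1, h2⟩
        refine ⟨⟨⟨π, ?_⟩, ⟨w, h1, h2⟩⟩, rfl⟩
        rw [← throughWord_length π w, h2, hvk]
    rw [← Nat.card_congr (Equiv.ofBijective f hf)]
    have := Fintype.ofFinite {π : HalfPairing n // (throughFinset π).card = k}
    rw [Nat.card_sigma]
    have hcard : ∀ π : {π : HalfPairing n // (throughFinset π).card = k},
        Nat.card {w : Fin n → Letter N // Admissible w π.1 ∧ throughWord w π.1 = v} =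
          (2 * N - 1) ^ m := by
      rintro ⟨π, hπ⟩
      rw [card_words π v hvc hv0 (by rw [hvk, hπ])]
      have := card_total π
      congr 1
      omega
    rw [Finset.sum_congr rfl (fun π _ => hcard π), Finset.sum_const, Finset.card_univ,
      ← Nat.card_eq_fintype_card, card_halfPairing m k hk (by omega), smul_eq_mul, mul_comm]
  · rw [Nat.card_eq_zero]
    left
    refine ⟨?_⟩
    rintro ⟨w, π, h1, h2⟩
    obtain ⟨x, -⟩ := π.exists_singleton
    have : NeZero n := ⟨by have := x.2; omega⟩
    have h3 := card_total π
    have h4 := throughWord_length π w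
    rw [h2, hvk] at h4
    exact h ⟨by omega, (inSet π).card, by omega⟩

end NCC
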